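/- arXiv:2004.07421 — 2 statements merged into one kernel-verified Lean document; each statement's English description precedes it below -/
import Mathlib

section
/- Let Ω ⊂ ℂⁿ be a bounded ℂ-convex domain. Then for every p ∈ Ω and every v ∈ ℂⁿ\{0}, the Kobayashi metric satisfies k_Ω(p;v) ≥ |v|/(4 δ_Ω(p;v)). -/
open Metric Set MeasureTheory Filter Topology

noncomputable section

variable {E : Type*} [NormedAddCommGroup E] [NormedSpace ℂ E]

/-- Distance from `x` to the boundary of `D`. -/
def bdist (D : Set E) (x : E) : ℝ := Metric.infDist x (frontier D)

/-- Distance from `x` to the boundary of `D` along the complex line `x + ℂ v`. -/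
def bdistDir (D : Set E) (x v : E) : ℝ :=
  Metric.infDist x (frontier D ∩ {w | ∃ c : ℂ, w = x + c • v})

/-- The infinitesimal Kobayashi (pseudo-)metric of `D ⊆ E`. -/
def kobMetric (D : Set E) (x v : E) : ℝ :=
  sInf { r : ℝ | ∃ (f : ℂ → E) (ξ : ℂ),
    DifferentiableOn ℂ f (ball (0:ℂ) 1) ∧ MapsTo f (ball (0:ℂ) 1) D ∧
    f 0 = x ∧ ξ • derivWithin f (ball (0:ℂ) 1) 0 = v ∧ r = ‖ξ‖ }

/-- `σ` is absolutely continuous on `[a,b]`, with a.e. derivative `g`. -/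
def IsACWithDeriv (σ g : ℝ → E) (a b : ℝ) : Prop :=
  IntervalIntegrable g volume a b ∧
  ∀ t ∈ Icc a b, σ t = σ a + ∫ s in a..t, g s

/-- The Kobayashi pseudo-distance of `D`, defined via lengths of absolutely
continuous curves (Venturini's description). -/
def kobDist (D : Set E) (x y : E) : ℝ :=
  sInf { r : ℝ | ∃ (a b : ℝ) (σ g : ℝ → E), a ≤ b ∧
    IsACWithDeriv σ g a b ∧ MapsTo σ (Icc a b) D ∧ σ a = x ∧ σ b = y ∧
    r = ∫ t in a..b, kobMetric D (σ t) (g t) }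

/-- Log-type convex domain, with explicit constants `C, ν > 0`. -/
def LogTypeConvexWith (D : Set E) (C ν : ℝ) : Prop :=
  IsOpen D ∧ D.Nonempty ∧ Bornology.IsBounded D ∧ Convex ℝ D ∧ 0 < C ∧ 0 < ν ∧
  ∀ z ∈ D, ∀ v : E, v ≠ 0 →
    bdistDir D z v ≤ C / |Real.log (bdist D z)| ^ (1 + ν)

/-- Log-type convex domain. -/
def LogTypeConvex (D : Set E) : Prop := ∃ C ν : ℝ, LogTypeConvexWith D C ν

/-- A `ℂ`-convex set: every nonempty intersection with a complex affine line is
connected and simply connected. -/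
def CConvex (D : Set E) : Prop :=
  ∀ z v : E, v ≠ 0 → (D ∩ {w | ∃ c : ℂ, w = z + c • v}).Nonempty →
    IsConnected (D ∩ {w | ∃ c : ℂ, w = z + c • v}) ∧
    SimplyConnectedSpace ↥(D ∩ {w | ∃ c : ℂ, w = z + c • v})

/-- Log-type `ℂ`-convex domain. -/
def LogTypeCConvex (D : Set E) : Prop :=
  IsOpen D ∧ D.Nonempty ∧ Bornology.IsBounded D ∧ CConvex D ∧
  ∃ C ν : ℝ, 0 < C ∧ 0 < ν ∧
    ∀ z ∈ D, ∀ v : E, v ≠ 0 →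
      bdistDir D z v ≤ C / |Real.log (bdist D z)| ^ (1 + ν)

/-- `σ : [a,b] → D` (with a.e. derivative `g`) is a `(λ,κ)`-almost geodesic for the
Kobayashi distance of `D`. -/
def AlmostGeodesicOn (D : Set E) (lam kap : ℝ) (σ g : ℝ → E) (a b : ℝ) : Prop :=
  MapsTo σ (Icc a b) D ∧ IsACWithDeriv σ g a b ∧
  (∀ s ∈ Icc a b, ∀ t ∈ Icc a b,
    (1 / lam) * |t - s| - kap ≤ kobDist D (σ s) (σ t) ∧
    kobDist D (σ s) (σ t) ≤ lam * |t - s| + kap) ∧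
  (∀ᵐ t ∂volume, t ∈ Icc a b → kobMetric D (σ t) (g t) ≤ lam)

/-- `σ : [a,b] → D` is a `C`-rough geodesic for the Kobayashi distance of `D`. -/
def RoughGeodesicOn (D : Set E) (C : ℝ) (σ : ℝ → E) (a b : ℝ) : Prop :=
  MapsTo σ (Icc a b) D ∧
  ∀ s ∈ Icc a b, ∀ t ∈ Icc a b,
    |t - s| - C ≤ kobDist D (σ s) (σ t) ∧ kobDist D (σ s) (σ t) ≤ |t - s| + C

/-- `ρ` is a `C¹` local defining function for `D` near `ξ` on the open set `W`. -/
def IsLocalDefiningFn (D : Set E) (ξ : E) (W : Set E) (ρ : E → ℝ) : Prop :=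
  IsOpen W ∧ ξ ∈ W ∧ ContDiffOn ℝ 1 ρ W ∧ (∀ x ∈ W, fderiv ℝ ρ x ≠ 0) ∧
  D ∩ W = {x ∈ W | ρ x < 0} ∧ frontier D ∩ W = {x ∈ W | ρ x = 0}

/-- `ξ` is a Dini-smooth boundary point of `D`: the boundary is `C¹` near `ξ` and the
unit normal admits a modulus of continuity `ω` satisfying the Dini condition. -/
def DiniSmoothBoundaryPoint (D : Set E) (ξ : E) : Prop :=
  ∃ (W : Set E) (ρ : E → ℝ) (ω : ℝ → ℝ),
    IsLocalDefiningFn D ξ W ρ ∧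
    (∀ t ∈ Icc (0:ℝ) 1, 0 ≤ ω t) ∧ MonotoneOn ω (Icc (0:ℝ) 1) ∧
    IntegrableOn (fun t => ω t / t) (Ioc (0:ℝ) 1) ∧
    ∀ x ∈ frontier D ∩ W, ∀ y ∈ frontier D ∩ W, ‖x - y‖ ≤ 1 →
      ‖(‖fderiv ℝ ρ x‖)⁻¹ • fderiv ℝ ρ x - (‖fderiv ℝ ρ y‖)⁻¹ • fderiv ℝ ρ y‖ ≤ ω ‖x - y‖

/-- `D` has `C^{1,ε}` boundary: near every boundary point there is a `C¹` defining
function whose differential is `ε`-Hölder. -/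
def HolderC1Boundary (D : Set E) (ε : ℝ) : Prop :=
  ∀ ξ ∈ frontier D, ∃ (W : Set E) (ρ : E → ℝ) (M : ℝ), 0 < M ∧
    IsLocalDefiningFn D ξ W ρ ∧
    ∀ x ∈ W, ∀ y ∈ W, ‖fderiv ℝ ρ x - fderiv ℝ ρ y‖ ≤ M * ‖x - y‖ ^ ε

/-- The complex affine tangent hyperplane of `∂D` at `x`, computed from a local
defining function `ρ`. -/
def complexTangentHyperplane (ρ : E → ℝ) (x : E) : Set E :=
  {w : E | fderiv ℝ ρ x (w - x) = 0 ∧ fderiv ℝ ρ x ((Complex.I : ℂ) • (w - x)) = 0}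

/-- The Gromov product of `x` and `y` with respect to the base point `o`, for the
Kobayashi distance of `D`. -/
def gromovProd (D : Set E) (o x y : E) : ℝ :=
  (kobDist D x o + kobDist D o y - kobDist D x y) / 2

end

/-
Let `q` be a boundary point of `Ω` on the complex line `p + ℂ v`. A `ℂ`-convex open set is
separated from `q` by a complex hyperplane: there is a functional `l` with `l x ≠ l q` on `Ω`,
because a maximal affine subspace through `q` disjoint from `Ω` is a hyperplane. The logarithms of
`l - l q` on the slices of `Ω` by the complex lines through one of its points fit together to a
continuous logarithm on `Ω`, and this is constant on the fibres of `l` since these meet `Ω` in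
connected sets. Along a holomorphic disc `f` in `Ω` it gives a square root `h` of `l ∘ f - l q`
with `h z + h w ≠ 0` for all `z`, `w`. Then `F = (h - h 0) / (h + h 0)` satisfies `F z * F w ≠ 1`,
so `‖deriv F 0‖ ≤ 1` by the Bieberbach–Eilenberg inequality, which is
`‖l (deriv f 0)‖ ≤ 4 * ‖l (f 0) - l q‖`.

The Bieberbach–Eilenberg inequality is obtained by comparing two estimates for the determinants of
the Taylor coefficients of `(1 - F z * F w)⁻¹`: this matrix is `AᵀA` with `A` triangular, so that
its determinant is a power of `deriv F 0` with quadratically growing exponent, while its entries are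
bounded.
-/

section CircleCoeff

/-- The `m`-th Taylor coefficient at `0` of a function holomorphic on the unit disc, computed from
its values on the unit circle. -/
noncomputable def circleCoeff (m : ℕ) (u : ℂ → ℂ) : ℂ :=
  Real.circleAverage (fun z => u z / z ^ m) 0 1

lemma circleCoeff_congr (m : ℕ) {u v : ℂ → ℂ} (h : EqOn u v (sphere 0 1)) :
    circleCoeff m u = circleCoeff m v :=
  Real.circleAverage_congr_sphere fun z hz => by
    simp only [h (show z ∈ sphere (0 : ℂ) 1 by simpa using hz)]

lemma norm_circleCoeff_le (m : ℕ) {u : ℂ → ℂ} {C : ℝ} (hu : ∀ z ∈ sphere (0 : ℂ) 1, ‖u z‖ ≤ C) :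
    ‖circleCoeff m u‖ ≤ C := by
  have hbound : ∀ θ ∈ uIoc (0 : ℝ) (2 * Real.pi),
      ‖u (circleMap 0 1 θ) / circleMap 0 1 θ ^ m‖ ≤ C := fun θ _ => by
    simpa using hu _ (circleMap_mem_sphere 0 zero_le_one θ)
  have := intervalIntegral.norm_integral_le_of_norm_le_const hbound
  rw [circleCoeff, Real.circleAverage_def, norm_smul, norm_inv,
    Real.norm_of_nonneg Real.two_pi_pos.le, inv_mul_le_iff₀ Real.two_pi_pos]
  rwa [sub_zero, abs_of_pos Real.two_pi_pos, mul_comm C] at this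

lemma circleIntegrable_div_pow (m : ℕ) {u : ℂ → ℂ} (hu : ContinuousOn u (sphere 0 1)) :
    CircleIntegrable (fun z => u z / z ^ m) 0 1 :=
  (hu.div (continuousOn_pow m) fun _ hz => pow_ne_zero m (ne_of_mem_sphere hz one_ne_zero)
    ).circleIntegrable zero_le_one

lemma circleCoeff_add (m : ℕ) {u v : ℂ → ℂ} (hu : ContinuousOn u (sphere 0 1))
    (hv : ContinuousOn v (sphere 0 1)) :
    circleCoeff m (fun z => u z + v z) = circleCoeff m u + circleCoeff m v := by
  simp only [circleCoeff, add_div]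
  exact Real.circleAverage_fun_add (circleIntegrable_div_pow m hu) (circleIntegrable_div_pow m hv)

lemma circleCoeff_sum_mul {ι : Type*} (m : ℕ) (s : Finset ι) {u : ι → ℂ → ℂ}
    (hu : ∀ i ∈ s, ContinuousOn (u i) (sphere 0 1)) (c : ι → ℂ) :
    circleCoeff m (fun z => ∑ i ∈ s, c i * u i z) = ∑ i ∈ s, c i * circleCoeff m (u i) := by
  simp only [circleCoeff, Finset.sum_div, mul_div_assoc]
  simp only [← smul_eq_mul (c _)]
  rw [Real.circleAverage_fun_sum fun i hi => (circleIntegrable_div_pow m (hu i hi)).const_fun_smul]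
  simp only [Real.circleAverage_fun_smul]

lemma circleCoeff_pow_mul {m k : ℕ} (hmk : m ≤ k) {v : ℂ → ℂ} (hv : DiffContOnCl ℂ v (ball 0 1)) :
    circleCoeff m (fun z => z ^ k * v z) = 0 ^ (k - m) * v 0 := by
  have hd : DiffContOnCl ℂ (fun z => z ^ (k - m) * v z) (ball 0 |1|) := by
    rw [abs_one]
    exact (differentiable_pow (k - m)).diffContOnCl.smul hv
  rw [← hd.circleAverage]
  refine Real.circleAverage_congr_sphere fun z hz => ?_
  have hz0 : z ≠ 0 := ne_of_mem_sphere hz (by simp)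
  obtain ⟨j, rfl⟩ := Nat.exists_eq_add_of_le hmk
  simp only [Nat.add_sub_cancel_left, pow_add]
  field_simp

end CircleCoeff

section PowMatrix

variable {F : ℂ → ℂ}

lemma diffContOnCl_dslope (hF : DiffContOnCl ℂ F (ball 0 1)) :
    DiffContOnCl ℂ (dslope F 0) (ball 0 1) := by
  have h0 : ball (0 : ℂ) 1 ∈ 𝓝 0 := ball_mem_nhds 0 one_pos
  exact ⟨(Complex.differentiableOn_dslope h0).2 hF.differentiableOn,
    (continuousOn_dslope (mem_of_superset h0 subset_closure)).2
      ⟨hF.continuousOn, hF.differentiableAt isOpen_ball (mem_of_mem_nhds h0)⟩⟩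

lemma circleCoeff_comp_pow_mul (hF : DiffContOnCl ℂ F (ball 0 1)) (h0 : F 0 = 0) {m k : ℕ}
    (hmk : m ≤ k) {v : ℂ → ℂ} (hv : DiffContOnCl ℂ v (ball 0 1)) :
    circleCoeff m (fun z => F z ^ k * v z) = 0 ^ (k - m) * (deriv F 0 ^ k * v 0) := by
  have hG := diffContOnCl_dslope hF
  have hpow : DiffContOnCl ℂ (fun z => dslope F 0 z ^ k * v z) (ball 0 1) :=
    ⟨(hG.differentiableOn.pow k).mul hv.differentiableOn,
      (hG.continuousOn.pow k).mul hv.continuousOn⟩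
  have hfactor (z : ℂ) : F z = z * dslope F 0 z := by
    simpa [h0] using (sub_smul_dslope F 0 z).symm
  rw [← dslope_same F 0, ← circleCoeff_pow_mul hmk hpow]
  refine circleCoeff_congr m fun z _ => ?_
  simp only [hfactor z, mul_pow, mul_assoc]

/-- The kernel `(1 - F(z) a)⁻¹` is a geometric series, whose tail vanishes to order `> N` at `0`. -/
lemma circleCoeff_inv_one_sub_mul (hF : DiffContOnCl ℂ F (ball 0 1)) (h0 : F 0 = 0) {a : ℂ}
    (ha : ∀ z ∈ closedBall (0 : ℂ) 1, F z * a ≠ 1) {m N : ℕ} (hmN : m ≤ N) :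
    circleCoeff m (fun z => (1 - F z * a)⁻¹) =
      ∑ k : Fin (N + 1), a ^ (k : ℕ) * circleCoeff m (fun z => F z ^ (k : ℕ)) := by
  have hne : ∀ z ∈ closedBall (0 : ℂ) 1, 1 - F z * a ≠ 0 := fun z hz =>
    sub_ne_zero.2 (ha z hz).symm
  have hker : DiffContOnCl ℂ (fun z => a ^ (N + 1) * (1 - F z * a)⁻¹) (ball 0 1) :=
    (((diffContOnCl_const.sub (hF.smul diffContOnCl_const)).inv fun z hz =>
      hne z (closure_ball_subset_closedBall hz)).const_smul (a ^ (N + 1)))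
  have hFs : ContinuousOn F (sphere 0 1) :=
    hF.continuousOn_ball.mono sphere_subset_closedBall
  have hsplit : EqOn (fun z => (1 - F z * a)⁻¹) (fun z =>
      (∑ k : Fin (N + 1), a ^ (k : ℕ) * F z ^ (k : ℕ)) +
        F z ^ (N + 1) * (a ^ (N + 1) * (1 - F z * a)⁻¹)) (sphere 0 1) := fun z hz => by
    have h1 := hne z (sphere_subset_closedBall hz)
    have hgeom := geom_sum_mul_neg (F z * a) (N + 1)
    rw [Finset.sum_range] at hgeom
    simp only [← mul_pow, mul_comm a]
    field_simp
    linear_combination -hgeom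
  rw [circleCoeff_congr m hsplit, circleCoeff_add, circleCoeff_comp_pow_mul hF h0 (by omega) hker,
    circleCoeff_sum_mul (u := fun k : Fin (N + 1) => fun z => F z ^ (k : ℕ)) _ _
      fun k _ => hFs.pow _, zero_pow (by omega), zero_mul, add_zero]
  · exact continuousOn_finsetSum _ fun k _ => (hFs.pow _).const_smul (a ^ (k : ℕ))
  · exact (hFs.pow _).mul (hker.continuousOn_ball.mono sphere_subset_closedBall)

/-- The matrix whose row `k` holds the first Taylor coefficients of `F ^ k`; it is upper triangular
with diagonal `deriv F 0 ^ k` when `F 0 = 0`. -/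
noncomputable def powCoeffMatrix (F : ℂ → ℂ) (N : ℕ) : Matrix (Fin (N + 1)) (Fin (N + 1)) ℂ :=
  .of fun k m => circleCoeff m (fun z => F z ^ (k : ℕ))

lemma det_powCoeffMatrix (hF : DiffContOnCl ℂ F (ball 0 1)) (h0 : F 0 = 0) (N : ℕ) :
    (powCoeffMatrix F N).det = deriv F 0 ^ (∑ k : Fin (N + 1), (k : ℕ)) := by
  have hentry {k m : Fin (N + 1)} (h : m ≤ k) :
      powCoeffMatrix F N k m = 0 ^ ((k : ℕ) - m) * deriv F 0 ^ (k : ℕ) := by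
    simpa [powCoeffMatrix] using circleCoeff_comp_pow_mul hF h0 (Fin.le_def.1 h)
      (diffContOnCl_const (c := (1 : ℂ)))
  have htri : (powCoeffMatrix F N).BlockTriangular id := fun k m hmk => by
    have hmk : m < k := hmk
    rw [hentry hmk.le, zero_pow (Nat.sub_ne_zero_of_lt hmk), zero_mul]
  rw [Matrix.det_of_isUpperTriangular htri, ← Finset.prod_pow_eq_pow_sum]
  exact Finset.prod_congr rfl fun k _ => by simpa using hentry (le_refl k)

/-- The entries of `AᵀA` are the double Taylor coefficients of the kernel `(1 - F(z) F(w))⁻¹`. -/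
lemma norm_transpose_mul_powCoeffMatrix_le (hF : DiffContOnCl ℂ F (ball 0 1)) (h0 : F 0 = 0)
    (hne : ∀ z ∈ closedBall (0 : ℂ) 1, ∀ w ∈ closedBall (0 : ℂ) 1, F z * F w ≠ 1) {C : ℝ}
    (hC : ∀ z ∈ sphere (0 : ℂ) 1, ∀ w ∈ sphere (0 : ℂ) 1, ‖(1 - F z * F w)⁻¹‖ ≤ C) (N : ℕ)
    (m n : Fin (N + 1)) : ‖((powCoeffMatrix F N).transpose * powCoeffMatrix F N) m n‖ ≤ C := by
  have hFs : ContinuousOn F (sphere 0 1) := hF.continuousOn_ball.mono sphere_subset_closedBall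
  have hentry : ((powCoeffMatrix F N).transpose * powCoeffMatrix F N) m n =
      circleCoeff n (fun w => circleCoeff m (fun z => (1 - F z * F w)⁻¹)) := by
    rw [circleCoeff_congr n fun w hw => circleCoeff_inv_one_sub_mul hF h0
      (fun z hz => hne z hz w (sphere_subset_closedBall hw)) (Nat.lt_succ_iff.1 m.2)]
    simp only [mul_comm (F _ ^ _)]
    rw [circleCoeff_sum_mul (u := fun k : Fin (N + 1) => fun z => F z ^ (k : ℕ)) _ _
      fun k _ => hFs.pow _]
    rfl
  rw [hentry]
  exact norm_circleCoeff_le _ fun w hw => norm_circleCoeff_le _ fun z hz => hC z hz w hw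

end PowMatrix

section BieberbachEilenberg

lemma le_one_of_forall_pow_le_factorial_mul_pow {x K : ℝ}
    (h : ∀ N : ℕ, x ^ (N * (N + 1)) ≤ (N + 1).factorial * K ^ (N + 1)) : x ≤ 1 := by
  by_contra! hx
  have hlin (N : ℕ) : x ^ N ≤ (N + 1) * |K| := by
    refine le_of_pow_le_pow_left₀ N.succ_ne_zero (by positivity) ?_
    calc (x ^ N) ^ (N + 1) ≤ (N + 1).factorial * K ^ (N + 1) := by simpa [pow_mul] using h N
      _ ≤ (N + 1).factorial * |K| ^ (N + 1) := by
        rw [← abs_pow]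
        gcongr
        exact le_abs_self _
      _ ≤ (N + 1) ^ (N + 1) * |K| ^ (N + 1) := by
        gcongr
        exact_mod_cast Nat.factorial_le_pow (N + 1)
      _ = ((N + 1) * |K|) ^ (N + 1) := (mul_pow _ _ _).symm
  have hlim : Tendsto (fun N : ℕ => ((N : ℝ) + 1) * |K| / x ^ N) atTop (𝓝 0) := by
    have := ((tendsto_pow_const_div_const_pow_of_one_lt 1 hx).add
      (tendsto_pow_const_div_const_pow_of_one_lt 0 hx)).mul_const |K|
    refine (this.congr fun N => ?_).trans (by simp)
    rw [pow_one, pow_zero]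
    ring
  obtain ⟨N, hN⟩ := (hlim.eventually_lt_const one_pos).exists
  rw [div_lt_one (by positivity)] at hN
  exact absurd (hlin N) hN.not_ge

lemma norm_deriv_le_one_of_diffContOnCl {F : ℂ → ℂ} (hF : DiffContOnCl ℂ F (ball 0 1))
    (h0 : F 0 = 0)
    (hne : ∀ z ∈ closedBall (0 : ℂ) 1, ∀ w ∈ closedBall (0 : ℂ) 1, F z * F w ≠ 1) :
    ‖deriv F 0‖ ≤ 1 := by
  obtain ⟨C, hC⟩ : ∃ C, ∀ q ∈ sphere (0 : ℂ) 1 ×ˢ sphere (0 : ℂ) 1,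
      ‖(1 - F q.1 * F q.2)⁻¹‖ ≤ C := by
    have hFs : ContinuousOn F (sphere 0 1) := hF.continuousOn_ball.mono sphere_subset_closedBall
    refine ((isCompact_sphere 0 1).prod (isCompact_sphere 0 1)).exists_bound_of_continuousOn ?_
    refine (continuousOn_const.sub ((hFs.comp continuousOn_fst fun q hq => hq.1).mul
      (hFs.comp continuousOn_snd fun q hq => hq.2))).inv₀ fun q hq => sub_ne_zero.2 ?_
    exact (hne _ (sphere_subset_closedBall hq.1) _ (sphere_subset_closedBall hq.2)).symm
  refine le_one_of_forall_pow_le_factorial_mul_pow (K := C) fun N => ?_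
  have hsum : (∑ k : Fin (N + 1), (k : ℕ)) * 2 = N * (N + 1) := by
    rw [Fin.sum_univ_eq_sum_range (fun i => i) (N + 1), Finset.sum_range_id_mul_two,
      Nat.add_sub_cancel, mul_comm]
  have hdet := Matrix.det_le (abv := IsAbsoluteValue.toAbsoluteValue (norm : ℂ → ℝ))
    (norm_transpose_mul_powCoeffMatrix_le hF h0 hne (fun z hz w hw => hC (z, w) ⟨hz, hw⟩) N)
  rw [Matrix.det_mul, Matrix.det_transpose, det_powCoeffMatrix hF h0, ← pow_add, ← mul_two,
    hsum] at hdet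
  simpa [nsmul_eq_mul] using hdet

/-- The Bieberbach–Eilenberg inequality. -/
theorem norm_deriv_le_one_of_mul_ne_one {F : ℂ → ℂ} (hF : DifferentiableOn ℂ F (ball 0 1))
    (h0 : F 0 = 0) (hne : ∀ z ∈ ball (0 : ℂ) 1, ∀ w ∈ ball (0 : ℂ) 1, F z * F w ≠ 1) :
    ‖deriv F 0‖ ≤ 1 := by
  have hscaled : ∀ s ∈ Ioo (0 : ℝ) 1, s * ‖deriv F 0‖ ≤ 1 := fun s hs => by
    have hmaps : MapsTo (fun z : ℂ => (s : ℂ) * z) (closedBall 0 1) (ball 0 1) := fun z hz => by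
      rw [mem_closedBall_zero_iff] at hz
      rw [mem_ball_zero_iff, norm_mul, Complex.norm_real, Real.norm_of_nonneg hs.1.le]
      exact (mul_le_of_le_one_right hs.1.le hz).trans_lt hs.2
    have hd : DifferentiableOn ℂ (fun z => F (s * z)) (closure (ball 0 1)) :=
      hF.comp (by fun_prop) (hmaps.mono_left closure_ball_subset_closedBall)
    have := norm_deriv_le_one_of_diffContOnCl hd.diffContOnCl (by simpa using h0)
      fun z hz w hw => hne _ (hmaps hz) _ (hmaps hw)
    simpa [deriv_comp_mul_left, abs_of_pos hs.1] using this
  have hlim : Tendsto (fun s : ℝ => s * ‖deriv F 0‖) (𝓝[<] 1) (𝓝 ‖deriv F 0‖) := by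
    simpa using ((tendsto_id (x := 𝓝 (1 : ℝ))).mono_left nhdsWithin_le_nhds).mul_const ‖deriv F 0‖
  exact le_of_tendsto hlim (eventually_of_mem (Ioo_mem_nhdsLT one_pos) hscaled)

lemma norm_deriv_le_two_mul_of_add_ne_zero {h : ℂ → ℂ} (hd : DifferentiableOn ℂ h (ball 0 1))
    (hne : ∀ z ∈ ball (0 : ℂ) 1, ∀ w ∈ ball (0 : ℂ) 1, h z + h w ≠ 0) :
    ‖deriv h 0‖ ≤ 2 * ‖h 0‖ := by
  have m0 : (0 : ℂ) ∈ ball (0 : ℂ) 1 := mem_ball_self one_pos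
  have ha : h 0 ≠ 0 := fun h' => hne 0 m0 0 m0 (by simp [h'])
  have hbound := norm_deriv_le_one_of_mul_ne_one (F := fun z => (h z - h 0) / (h z + h 0))
    ((hd.sub_const _).div (hd.add_const _) fun z hz => hne z hz 0 m0) (by simp)
    fun z hz w hw h' => by
      rw [div_mul_div_comm, div_eq_one_iff_eq (mul_ne_zero (hne z hz 0 m0) (hne w hw 0 m0))] at h'
      refine mul_ne_zero ha (hne z hz w hw) ?_
      linear_combination (-1 / 2) * h'
  have hderiv : deriv (fun z => (h z - h 0) / (h z + h 0)) 0 = deriv h 0 / (2 * h 0) := by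
    have hh : HasDerivAt h (deriv h 0) 0 :=
      (hd.differentiableAt (ball_mem_nhds _ one_pos)).hasDerivAt
    rw [((hh.sub_const (h 0)).fun_div (hh.add_const (h 0)) (hne 0 m0 0 m0)).deriv]
    field_simp
    ring
  rw [hderiv, norm_div, norm_mul, div_le_one (by simpa using ha)] at hbound
  simpa using hbound

end BieberbachEilenberg

section Koebe

lemma hasDerivAt_of_hasStrictDerivAt_comp {f h : ℂ → ℂ} {f' g' z : ℂ}
    (hf : HasStrictDerivAt f f' (h z)) (hf' : f' ≠ 0) (hh : ContinuousAt h z)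
    (hg : HasDerivAt (f ∘ h) g' z) : HasDerivAt h (f'⁻¹ * g') z := by
  have hinv : HasDerivAt (hf.localInverse f f' (h z) hf') f'⁻¹ ((f ∘ h) z) :=
    (hf.to_localInverse hf').hasDerivAt
  refine (hinv.comp z hg).congr_of_eventuallyEq ?_
  exact (hh.eventually (hf.eventually_left_inverse hf')).mono fun w hw => hw.symm

/-- The square root `h = exp (L / 2)` of `g` satisfies `h z + h w ≠ 0`. -/
lemma norm_deriv_le_four_mul_of_exp_eq {g L : ℂ → ℂ} (hg : DifferentiableOn ℂ g (ball 0 1))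
    (hL : ContinuousOn L (ball 0 1)) (hexp : ∀ z ∈ ball (0 : ℂ) 1, Complex.exp (L z) = g z)
    (hinj : ∀ z ∈ ball (0 : ℂ) 1, ∀ w ∈ ball (0 : ℂ) 1, g z = g w → L z = L w) :
    ‖deriv g 0‖ ≤ 4 * ‖g 0‖ := by
  have hLg : ∀ z ∈ ball (0 : ℂ) 1, HasDerivAt L ((Complex.exp (L z))⁻¹ * deriv g z) z :=
    fun z hz => by
      have hU : ball (0 : ℂ) 1 ∈ 𝓝 z := isOpen_ball.mem_nhds hz
      refine hasDerivAt_of_hasStrictDerivAt_comp (Complex.hasStrictDerivAt_exp _)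
        (Complex.exp_ne_zero _) (hL.continuousAt hU) ?_
      exact (hg.differentiableAt hU).hasDerivAt.congr_of_eventuallyEq (eventually_of_mem hU hexp)
  have hroot : ∀ z ∈ ball (0 : ℂ) 1, HasDerivAt (fun z => Complex.exp (L z / 2))
      (Complex.exp (L z / 2) * ((g z)⁻¹ * deriv g z / 2)) z := fun z hz => by
    simpa only [hexp z hz] using ((hLg z hz).div_const 2).cexp
  have hsq : ∀ z ∈ ball (0 : ℂ) 1, Complex.exp (L z / 2) ^ 2 = g z := fun z hz => by
    rw [← hexp z hz, ← Complex.exp_nat_mul, Nat.cast_ofNat, mul_div_cancel₀ _ two_ne_zero]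
  have hne : ∀ z ∈ ball (0 : ℂ) 1, ∀ w ∈ ball (0 : ℂ) 1,
      Complex.exp (L z / 2) + Complex.exp (L w / 2) ≠ 0 := fun z hz w hw h' => by
    have hgzw : g z = g w := by rw [← hsq z hz, ← hsq w hw, eq_neg_of_add_eq_zero_left h', neg_sq]
    rw [hinj z hz w hw hgzw, ← two_mul] at h'
    exact mul_ne_zero two_ne_zero (Complex.exp_ne_zero _) h'
  have m0 : (0 : ℂ) ∈ ball (0 : ℂ) 1 := mem_ball_self one_pos
  have hroot_le := norm_deriv_le_two_mul_of_add_ne_zero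
    (fun z hz => (hroot z hz).differentiableAt.differentiableWithinAt) hne
  have hg0 : 0 < ‖g 0‖ := by rw [← hexp 0 m0]; exact norm_pos_iff.2 (Complex.exp_ne_zero _)
  have hr0 : 0 < ‖Complex.exp (L 0 / 2)‖ := norm_pos_iff.2 (Complex.exp_ne_zero _)
  rw [(hroot 0 m0).deriv, norm_mul, mul_comm 2, mul_le_mul_iff_right₀ hr0, norm_div, norm_mul,
    norm_inv, Complex.norm_ofNat, div_le_iff₀ two_pos, inv_mul_le_iff₀ hg0] at hroot_le
  linarith

end Koebe

section CConvex

variable {Y Z : Type*} [NormedAddCommGroup Y] [NormedSpace ℂ Y] [NormedAddCommGroup Z]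
  [NormedSpace ℂ Z] {D : Set Y}

lemma isSimplyConnected_univ (X : Type*) [TopologicalSpace X] [SimplyConnectedSpace X] :
    IsSimplyConnected (univ : Set X) :=
  (Homeomorph.Set.univ X).toHomotopyEquiv.simplyConnectedSpace

lemma inter_line_eq_image (D : Set Y) (y v : Y) :
    D ∩ {w | ∃ c : ℂ, w = y + c • v} = (fun c : ℂ => y + c • v) '' {c | y + c • v ∈ D} := by
  ext w
  constructor
  · rintro ⟨hw, c, rfl⟩
    exact ⟨c, hw, rfl⟩
  · rintro ⟨c, hc, rfl⟩
    exact ⟨hc, c, rfl⟩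

lemma isSimplyConnected_inter_line_iff {y v : Y} (hv : v ≠ 0) :
    IsSimplyConnected (D ∩ {w | ∃ c : ℂ, w = y + c • v}) ↔
      IsSimplyConnected {c : ℂ | y + c • v ∈ D} := by
  have hemb : IsEmbedding fun c : ℂ => y + c • v :=
    (Homeomorph.addLeft y).isEmbedding.comp (LinearMap.isClosedEmbedding_of_injective
      (f := LinearMap.toSpanSingleton ℂ Y v) (LinearMap.ker_toSpanSingleton ℂ hv)).isEmbedding
  rw [inter_line_eq_image, hemb.isSimplyConnected_image]

lemma cConvex_iff_isSimplyConnected :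
    CConvex D ↔ ∀ y ∈ D, ∀ v : Y, IsSimplyConnected {c : ℂ | y + c • v ∈ D} := by
  refine ⟨fun hD y hy v => ?_, fun hD z v hv => ?_⟩
  · rcases eq_or_ne v 0 with rfl | hv
    · simpa [hy] using isSimplyConnected_univ ℂ
    · exact (isSimplyConnected_inter_line_iff hv).1 (hD y v hv ⟨y, hy, 0, by simp⟩).2
  · rintro ⟨_, hy, a, rfl⟩
    have hline : {w | ∃ c : ℂ, w = z + c • v} = {w | ∃ c : ℂ, w = z + a • v + c • v} :=
      ext fun w => ⟨fun ⟨c, hc⟩ => ⟨c - a, by rw [hc]; module⟩,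
        fun ⟨c, hc⟩ => ⟨a + c, by rw [hc]; module⟩⟩
    have hsc := (isSimplyConnected_inter_line_iff hv).2 (hD _ hy v)
    rw [hline]
    exact ⟨hsc.isPathConnected.isConnected, hsc⟩

lemma CConvex.preimage_clm {D : Set Z} (hD : CConvex D) (A : Y →L[ℂ] Z) : CConvex (A ⁻¹' D) :=
  cConvex_iff_isSimplyConnected.2 fun y hy v => by
    simpa using cConvex_iff_isSimplyConnected.1 hD (A y) hy (A v)

lemma CConvex.preimage_add_right (hD : CConvex D) (q : Y) : CConvex ((· + q) ⁻¹' D) :=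
  cConvex_iff_isSimplyConnected.2 fun y hy v => by
    simpa [add_right_comm] using cConvex_iff_isSimplyConnected.1 hD (y + q) hy v

lemma CConvex.isPreconnected (hD : CConvex D) : IsPreconnected D := by
  refine isPreconnected_of_forall_pair fun y hy y' hy' => ?_
  refine ⟨(fun c : ℂ => y + c • (y' - y)) '' {c | y + c • (y' - y) ∈ D}, ?_,
    ⟨0, by simpa using hy, by simp⟩, ⟨1, by simpa using hy', by simp⟩, ?_⟩
  · rintro _ ⟨c, hc, rfl⟩
    exact hc
  · exact (cConvex_iff_isSimplyConnected.1 hD y hy (y' - y)).isPathConnected.isConnected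
      |>.isPreconnected.image _ (by fun_prop)

end CConvex

section LogBranch

variable {A B : Type*} [TopologicalSpace A] [TopologicalSpace B] {s : Set A} {L L' φ : A → ℂ}

/-- `L` is a continuous branch of `log φ` on `s`. -/
def IsLogBranchOn (L φ : A → ℂ) (s : Set A) : Prop :=
  ContinuousOn L s ∧ ∀ x ∈ s, Complex.exp (L x) = φ x

lemma exists_isLogBranchOn [LocallyPathConnectedSpace A] (hs : IsSimplyConnected s)
    (hso : IsOpen s) (hφ : ContinuousOn φ s) (hφ0 : ∀ x ∈ s, φ x ≠ 0) :
    ∃ L, IsLogBranchOn L φ s :=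
  Complex.exists_continuousOn_eqOn_exp_comp hs hso hφ fun ⟨x, hx, h0⟩ => hφ0 x hx h0

lemma IsLogBranchOn.comp (hL : IsLogBranchOn L φ s) {g : B → A} {t : Set B}
    (hg : ContinuousOn g t) (hmaps : MapsTo g t s) : IsLogBranchOn (L ∘ g) (φ ∘ g) t :=
  ⟨hL.1.comp hg hmaps, fun x hx => hL.2 (g x) (hmaps hx)⟩

lemma IsLogBranchOn.sub_eq_sub (hs : IsPreconnected s) (hL : IsLogBranchOn L φ s)
    (hL' : IsLogBranchOn L' φ s) {a b : A} (ha : a ∈ s) (hb : b ∈ s) :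
    L b - L a = L' b - L' a := by
  have hEq := Complex.isCoveringMap_exp.eqOn_of_comp_eqOn hs hL.1
    (hL'.1.add (continuousOn_const (c := L a - L' a))) (fun x hx => Subtype.ext ?_) ha
    (by simp)
  · have hb' : L b = L' b + (L a - L' a) := hEq hb
    linear_combination hb'
  · simp [Complex.exp_add, Complex.exp_sub, hL.2 x hx, hL'.2 x hx, hL.2 a ha, hL'.2 a ha,
      show φ a ≠ 0 from hL.2 a ha ▸ Complex.exp_ne_zero _]

lemma IsLogBranchOn.eq_of_eq (hs : IsPreconnected s) (hL : IsLogBranchOn L φ s)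
    (hconst : ∀ x ∈ s, ∀ y ∈ s, φ x = φ y) {a b : A} (ha : a ∈ s) (hb : b ∈ s) : L a = L b := by
  have hc : IsLogBranchOn (fun _ => L a) φ s :=
    ⟨continuousOn_const, fun x hx => (hL.2 a ha).trans (hconst a ha x hx)⟩
  simpa [sub_eq_zero, eq_comm] using hL.sub_eq_sub hs hc ha hb

end LogBranch

section LogIncrement

variable {Y : Type*} [NormedAddCommGroup Y] [NormedSpace ℂ Y] {D : Set Y} {φ : Y → ℂ} {y y' : Y}

/-- The increment from `y` to `y'` of a continuous branch of `log φ` on the intersection of `D` with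
the complex line through `y` and `y'`; it does not depend on the branch when that slice is
connected. -/
noncomputable def logIncrement (D : Set Y) (φ : Y → ℂ) (y y' : Y) : ℂ :=
  Classical.epsilon fun d => ∃ L : ℂ → ℂ,
    IsLogBranchOn L (fun c => φ (y + c • (y' - y))) {c | y + c • (y' - y) ∈ D} ∧ d = L 1 - L 0

lemma logIncrement_spec (hDo : IsOpen D) (hD : CConvex D) (hφ : ContinuousOn φ D)
    (hφ0 : ∀ z ∈ D, φ z ≠ 0) (hy : y ∈ D) (y' : Y) : ∃ L : ℂ → ℂ,
      IsLogBranchOn L (fun c => φ (y + c • (y' - y))) {c | y + c • (y' - y) ∈ D} ∧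
        logIncrement D φ y y' = L 1 - L 0 := by
  have hline : Continuous fun c : ℂ => y + c • (y' - y) := by fun_prop
  obtain ⟨L, hL⟩ := exists_isLogBranchOn (cConvex_iff_isSimplyConnected.1 hD y hy (y' - y))
    (hDo.preimage hline) (hφ.comp hline.continuousOn fun _ hc => hc) fun c hc => hφ0 _ hc
  exact Classical.epsilon_spec (p := fun d => ∃ L : ℂ → ℂ, IsLogBranchOn L
    (fun c => φ (y + c • (y' - y))) {c | y + c • (y' - y) ∈ D} ∧ d = L 1 - L 0) ⟨_, L, hL, rfl⟩

lemma exp_logIncrement (hDo : IsOpen D) (hD : CConvex D) (hφ : ContinuousOn φ D)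
    (hφ0 : ∀ z ∈ D, φ z ≠ 0) (hy : y ∈ D) (hy' : y' ∈ D) :
    Complex.exp (logIncrement D φ y y') = φ y' / φ y := by
  obtain ⟨L, hL, hinc⟩ := logIncrement_spec hDo hD hφ hφ0 hy y'
  rw [hinc, Complex.exp_sub, hL.2 1 (by simpa using hy'), hL.2 0 (by simpa using hy)]
  simp

lemma logIncrement_eq_of_path (hDo : IsOpen D) (hD : CConvex D) (hφ : ContinuousOn φ D)
    (hφ0 : ∀ z ∈ D, φ z ≠ 0) (γ : Path (0 : ℂ) 1) (hγ : ∀ t, y + γ t • (y' - y) ∈ D)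
    {L : unitInterval → ℂ} (hL : IsLogBranchOn L (fun t => φ (y + γ t • (y' - y))) univ) :
    logIncrement D φ y y' = L 1 - L 0 := by
  have hy : y ∈ D := by simpa using hγ 0
  obtain ⟨L₀, hL₀, hinc⟩ := logIncrement_spec hDo hD hφ hφ0 hy y'
  have hcomp := (hL₀.comp γ.continuous.continuousOn fun t _ => hγ t).sub_eq_sub
    isPreconnected_univ hL (mem_univ 0) (mem_univ 1)
  simpa [hinc] using hcomp

lemma exists_path_logIncrement_eq (hDo : IsOpen D) (hD : CConvex D) (hφ : ContinuousOn φ D)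
    (hφ0 : ∀ z ∈ D, φ z ≠ 0) (hy : y ∈ D) (hy' : y' ∈ D) :
    ∃ (γ : Path (0 : ℂ) 1) (L : unitInterval → ℂ), (∀ t, y + γ t • (y' - y) ∈ D) ∧
      IsLogBranchOn L (fun t => φ (y + γ t • (y' - y))) univ ∧
        logIncrement D φ y y' = L 1 - L 0 := by
  obtain ⟨L, hL, hinc⟩ := logIncrement_spec hDo hD hφ hφ0 hy y'
  obtain ⟨γ, hγ⟩ := (cConvex_iff_isSimplyConnected.1 hD y hy (y' - y)).isPathConnected.joinedIn
    0 (by simpa using hy) 1 (by simpa using hy')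
  exact ⟨γ, L ∘ γ, hγ, hL.comp γ.continuous.continuousOn fun t _ => hγ t, by simpa using hinc⟩

end LogIncrement

section Family

variable {X Y : Type*} [TopologicalSpace X] [NormedAddCommGroup Y] [NormedSpace ℂ Y]
  {W : Set (X × Y)} {φ : X × Y → ℂ}

lemma eventually_forall_div_mem_slitPlane {Z T : Type*} [TopologicalSpace Z] [TopologicalSpace T]
    [CompactSpace T] {ψ : Z → T → ℂ} {z₀ : Z} (hψ : ∀ t, ContinuousAt ψ.uncurry (z₀, t))
    (hne : ∀ t, ψ z₀ t ≠ 0) : ∀ᶠ z in 𝓝 z₀, ∀ t, ψ z t / ψ z₀ t ∈ Complex.slitPlane := by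
  have hlocal : ∀ t ∈ (univ : Set T), ∀ᶠ p : Z × T in 𝓝 (z₀, t),
      ψ p.1 p.2 / ψ z₀ p.2 ∈ Complex.slitPlane := fun t _ => by
    have hproj : ContinuousAt (fun p : Z × T => (z₀, p.2)) (z₀, t) := by fun_prop
    have hbase : ContinuousAt (fun p : Z × T => ψ z₀ p.2) (z₀, t) :=
      ContinuousAt.comp (g := ψ.uncurry) (x := (z₀, t)) (hψ t) hproj
    refine ((hψ t).div hbase (hne t)).eventually_mem (Complex.isOpen_slitPlane.mem_nhds ?_)
    simp [div_self (hne t)]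
  simpa using isCompact_univ.eventually_forall_of_forall_eventually hlocal

lemma eventually_logIncrement_eq (hW : IsOpen W) (hWc : ∀ x, CConvex (Prod.mk x ⁻¹' W))
    (hφ : ContinuousOn φ W) (hφ0 : ∀ q ∈ W, φ q ≠ 0) {x₀ : X} {y y' : Y} (hy : (x₀, y) ∈ W)
    (hy' : (x₀, y') ∈ W) :
    ∀ᶠ q : X × Y in 𝓝 (x₀, y'), logIncrement (Prod.mk q.1 ⁻¹' W) (φ ∘ Prod.mk q.1) y q.2 =
      logIncrement (Prod.mk x₀ ⁻¹' W) (φ ∘ Prod.mk x₀) y y' +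
        (Complex.log (φ q / φ (x₀, y')) - Complex.log (φ (q.1, y) / φ (x₀, y))) := by
  have hfib (x : X) : IsOpen (Prod.mk x ⁻¹' W) := hW.preimage (by fun_prop)
  have hφx (x : X) : ContinuousOn (φ ∘ Prod.mk x) (Prod.mk x ⁻¹' W) :=
    hφ.comp (by fun_prop) fun _ h => h
  obtain ⟨γ, L, hγ, hL, hinc⟩ := exists_path_logIncrement_eq (hfib x₀) (hWc x₀) (hφx x₀)
    (fun z hz => hφ0 _ hz) hy hy'
  have hγW (t) : (x₀, y + γ t • (y' - y)) ∈ W := hγ t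
  have hpath : Continuous fun p : (X × Y) × unitInterval =>
      (p.1.1, y + γ p.2 • (p.1.2 - y)) := by fun_prop
  have hmem : ∀ᶠ q : X × Y in 𝓝 (x₀, y'), ∀ t, (q.1, y + γ t • (q.2 - y)) ∈ W := by
    simpa using isCompact_univ.eventually_forall_of_forall_eventually
      (P := fun (q : X × Y) t => (q.1, y + γ t • (q.2 - y)) ∈ W)
      fun t _ => hpath.continuousAt.eventually_mem (hW.mem_nhds (hγW t))
  have hslit := eventually_forall_div_mem_slitPlane (z₀ := (x₀, y'))
    (ψ := fun q t => φ (q.1, y + γ t • (q.2 - y)))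
    (fun t => ContinuousAt.comp (x := ((x₀, y'), t)) (hφ.continuousAt (hW.mem_nhds (hγW t)))
      hpath.continuousAt)
    fun t => hφ0 _ (hγW t)
  filter_upwards [hmem, hslit] with q hqW hqslit
  have hcont {q : X × Y} (hq : ∀ t, (q.1, y + γ t • (q.2 - y)) ∈ W) :
      Continuous fun t => φ (q.1, y + γ t • (q.2 - y)) :=
    hφ.comp_continuous (by fun_prop) hq
  rw [logIncrement_eq_of_path (hfib q.1) (hWc q.1) (hφx q.1) (fun z hz => hφ0 _ hz) γ hqW
    (L := fun t => L t + Complex.log (φ (q.1, y + γ t • (q.2 - y)) / φ (x₀, y + γ t • (y' - y)))),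
    hinc]
  · simp
    ring
  · refine ⟨hL.1.add (((hcont hqW).div (hcont (q := (x₀, y')) hγ) fun t => hφ0 _ (hγ t)).clog
      hqslit).continuousOn, fun t _ => ?_⟩
    rw [Complex.exp_add, hL.2 t (mem_univ t),
      Complex.exp_log (div_ne_zero (hφ0 _ (hqW t)) (hφ0 _ (hγ t)))]
    exact mul_div_cancel₀ _ (hφ0 _ (hγ t))

lemma continuousAt_logIncrement (hW : IsOpen W) (hWc : ∀ x, CConvex (Prod.mk x ⁻¹' W))
    (hφ : ContinuousOn φ W) (hφ0 : ∀ q ∈ W, φ q ≠ 0) {x₀ : X} {y y' : Y} (hy : (x₀, y) ∈ W)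
    (hy' : (x₀, y') ∈ W) :
    ContinuousAt (fun q : X × Y => logIncrement (Prod.mk q.1 ⁻¹' W) (φ ∘ Prod.mk q.1) y q.2)
      (x₀, y') := by
  have hlog {g : X × Y → X × Y} (hg : ContinuousAt g (x₀, y')) (hgW : g (x₀, y') ∈ W) :
      ContinuousAt (fun q => Complex.log (φ (g q) / φ (g (x₀, y')))) (x₀, y') := by
    refine (((hφ.continuousAt (hW.mem_nhds hgW)).comp hg).div_const _).clog ?_
    simp [div_self (hφ0 _ hgW)]
  refine ContinuousAt.congr_of_eventuallyEq ?_ (eventually_logIncrement_eq hW hWc hφ hφ0 hy hy')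
  exact continuousAt_const.add ((hlog continuousAt_id hy').sub
    (hlog (g := fun q => (q.1, y)) (by fun_prop) hy))

lemma isLogBranchOn_logIncrement_add_log {D : Set Y} (hDo : IsOpen D) (hD : CConvex D) {φ : Y → ℂ}
    (hφ : ContinuousOn φ D) (hφ0 : ∀ z ∈ D, φ z ≠ 0) {y : Y} (hy : y ∈ D) :
    IsLogBranchOn (fun z => logIncrement D φ y z + Complex.log (φ y)) φ D := by
  refine ⟨ContinuousOn.add (fun z hz => ?_) continuousOn_const, fun z hz => ?_⟩
  · have hcont := continuousAt_logIncrement (X := Unit) (W := Prod.snd ⁻¹' D)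
      (φ := φ ∘ Prod.snd) (x₀ := ()) (hDo.preimage continuous_snd) (fun _ => hD)
      (hφ.comp continuousOn_snd fun _ h => h) (fun q hq => hφ0 _ hq) hy hz
    exact (hcont.comp (f := fun z : Y => ((), z)) (by fun_prop)).continuousWithinAt
  · rw [Complex.exp_add, exp_logIncrement hDo hD hφ hφ0 hy hz, Complex.exp_log (hφ0 y hy),
      div_mul_cancel₀ _ (hφ0 y hy)]

/-- The average of the increments of `log φ` along the fibres of `W`, the base points being weighted
by the partition of unity `ρ`; this replaces a continuous choice of base points. -/
noncomputable def avgLogIncrement (ρ : PartitionOfUnity Y X) (W : Set (X × Y)) (φ : X × Y → ℂ)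
    (q : X × Y) : ℂ :=
  ∑ᶠ y, ρ y q.1 • logIncrement (Prod.mk q.1 ⁻¹' W) (φ ∘ Prod.mk q.1) y q.2

lemma continuousOn_avgLogIncrement (hW : IsOpen W) (hWc : ∀ x, CConvex (Prod.mk x ⁻¹' W))
    (hφ : ContinuousOn φ W) (hφ0 : ∀ q ∈ W, φ q ≠ 0) {ρ : PartitionOfUnity Y X}
    (hρ : ρ.IsSubordinate fun y => {x | (x, y) ∈ W}) : ContinuousOn (avgLogIncrement ρ W φ) W := by
  rw [continuousOn_iff_continuous_domRestrict]
  have hfst : Continuous fun q : W => q.1.1 := by fun_prop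
  refine continuous_finsum (fun y => continuous_iff_continuousAt.2 fun q => ?_)
    ((ρ.locallyFinite.preimage_continuous hfst).subset fun y q hq => left_ne_zero_of_smul hq)
  by_cases hq : q.1.1 ∈ tsupport (ρ y)
  · have hinc := continuousAt_logIncrement hW hWc hφ hφ0 (hρ y hq) q.2
    exact ((map_continuous (ρ y)).comp hfst).continuousAt.smul
      (ContinuousAt.comp (f := Subtype.val) (x := q) hinc continuousAt_subtype_val)
  · refine (continuousAt_const (y := (0 : ℂ))).congr ?_
    filter_upwards [hfst.continuousAt.eventually_mem
      ((isClosed_tsupport (ρ y)).isOpen_compl.mem_nhds hq)] with q' hq'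
    simp [image_eq_zero_of_notMem_tsupport hq']

lemma avgLogIncrement_sub_avgLogIncrement (hW : IsOpen W)
    (hWc : ∀ x, CConvex (Prod.mk x ⁻¹' W)) (hφ : ContinuousOn φ W) (hφ0 : ∀ q ∈ W, φ q ≠ 0)
    {ρ : PartitionOfUnity Y X} (hρ : ρ.IsSubordinate fun y => {x | (x, y) ∈ W}) {x : X}
    {L : Y → ℂ} (hL : IsLogBranchOn L (φ ∘ Prod.mk x) (Prod.mk x ⁻¹' W)) {y y' : Y}
    (hy : (x, y) ∈ W) (hy' : (x, y') ∈ W) :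
    avgLogIncrement ρ W φ (x, y') - avgLogIncrement ρ W φ (x, y) = L y' - L y := by
  set F := logIncrement (Prod.mk x ⁻¹' W) (φ ∘ Prod.mk x)
  have hF {i : Y} (hi : (x, i) ∈ W) : F i y' - F i y = L y' - L y := by
    have hbranch := isLogBranchOn_logIncrement_add_log (hW.preimage (by fun_prop)) (hWc x)
      (hφ.comp (by fun_prop) fun _ h => h) (fun z hz => hφ0 _ hz) hi
    simpa using hbranch.sub_eq_sub (hWc x).isPreconnected hL hy hy'
  have hsum (z : Y) : avgLogIncrement ρ W φ (x, z) = ∑ i ∈ ρ.finsupport x, ρ i x • F i z :=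
    (ρ.sum_finsupport_smul_eq_finsum fun i x' =>
      logIncrement (Prod.mk x' ⁻¹' W) (φ ∘ Prod.mk x') i z).symm
  calc avgLogIncrement ρ W φ (x, y') - avgLogIncrement ρ W φ (x, y)
      = ∑ i ∈ ρ.finsupport x, ρ i x • (F i y' - F i y) := by
        simp only [hsum, smul_sub, Finset.sum_sub_distrib]
    _ = ∑ i ∈ ρ.finsupport x, ρ i x • (L y' - L y) :=
        Finset.sum_congr rfl fun i hi => by
          rw [hF (hρ i (subset_tsupport _ ((ρ.mem_finsupport x).1 hi)))]
    _ = L y' - L y := by rw [← Finset.sum_smul, ρ.sum_finsupport (mem_univ x), one_smul]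

lemma exists_continuousMap_eq_comp_fst {Y Z : Type*} [TopologicalSpace Y] [TopologicalSpace Z]
    {W : Set (X × Y)} (hW : IsOpen W) (hne : ∀ x, (Prod.mk x ⁻¹' W).Nonempty) {ψ : X × Y → Z}
    (hψ : ContinuousOn ψ W)
    (hconst : ∀ x y y', (x, y) ∈ W → (x, y') ∈ W → ψ (x, y) = ψ (x, y')) :
    ∃ e : C(X, Z), ∀ q ∈ W, ψ q = e q.1 := by
  let π : C(W, X) := ⟨fun q => q.1.1, by fun_prop⟩
  have hπ : IsQuotientMap π :=
    (isOpenMap_fst.comp hW.isOpenMap_subtype_val).isQuotientMap π.continuous fun x =>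
      (hne x).elim fun y hy => ⟨⟨(x, y), hy⟩, rfl⟩
  have hfactor : Function.FactorsThrough (W.domRestrict ψ) π := by
    rintro ⟨⟨x, y⟩, hq⟩ ⟨⟨_, y'⟩, hq'⟩ (rfl : x = _)
    exact hconst x y y' hq hq'
  let ψW : C(W, Z) := ⟨W.domRestrict ψ, hψ.domRestrict⟩
  exact ⟨hπ.lift ψW hfactor,
    fun q hq => (DFunLike.congr_fun (hπ.lift_comp ψW hfactor) ⟨q, hq⟩).symm⟩

theorem exists_isLogBranchOn_of_cConvex_fibers [SimplyConnectedSpace X]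
    [LocallyPathConnectedSpace X] [NormalSpace X] [ParacompactSpace X] (hW : IsOpen W)
    (hWc : ∀ x, CConvex (Prod.mk x ⁻¹' W)) (hne : ∀ x, (Prod.mk x ⁻¹' W).Nonempty)
    (hφ : ContinuousOn φ W) (hφ0 : ∀ q ∈ W, φ q ≠ 0) : ∃ L, IsLogBranchOn L φ W := by
  obtain ⟨ρ, hρ⟩ := PartitionOfUnity.exists_isSubordinate isClosed_univ
    (fun y => {x | (x, y) ∈ W}) (fun y => hW.preimage (by fun_prop))
    fun x _ => mem_iUnion.2 (hne x)
  have hM := continuousOn_avgLogIncrement hW hWc hφ hφ0 hρ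
  set M := avgLogIncrement ρ W φ
  obtain ⟨e, he⟩ := exists_continuousMap_eq_comp_fst hW hne
    (ψ := fun q => φ q * Complex.exp (-M q)) (hφ.mul hM.neg.cexp) fun x y y' hy hy' => by
      have hbranch := isLogBranchOn_logIncrement_add_log (hW.preimage (by fun_prop)) (hWc x)
        (hφ.comp (by fun_prop) fun _ h => h) (fun z hz => hφ0 _ hz) hy
      have hsub := avgLogIncrement_sub_avgLogIncrement hW hWc hφ hφ0 hρ hbranch hy hy'
      rw [← show _ = φ (x, y) from hbranch.2 y hy, ← show _ = φ (x, y') from hbranch.2 y' hy',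
        ← Complex.exp_add, ← Complex.exp_add]
      congr 1
      linear_combination hsub
  obtain ⟨ℓ, hℓ⟩ := exists_isLogBranchOn (isSimplyConnected_univ X) isOpen_univ
    e.continuous.continuousOn fun x _ => by
      obtain ⟨y, hy⟩ := hne x
      exact he (x, y) hy ▸ mul_ne_zero (hφ0 _ hy) (Complex.exp_ne_zero _)
  refine ⟨fun q => ℓ q.1 + M q, (hℓ.1.comp continuousOn_fst fun _ _ => mem_univ _).add hM,
    fun q hq => ?_⟩
  rw [Complex.exp_add, hℓ.2 q.1 (mem_univ _), ← he q hq, mul_assoc, ← Complex.exp_add]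
  simp

end Family

section Hyperplane

variable {V : Type*} [NormedAddCommGroup V] [NormedSpace ℂ V] {Ω : Set V}

lemma not_isLogBranchOn_of_loop {A : Type*} [TopologicalSpace A] {L φ : A → ℂ} {s : Set A}
    {q : ℝ → A} (hq : Continuous q) (hqs : ∀ θ, q θ ∈ s) (hloop : q (2 * Real.pi) = q 0)
    (hφ : ∀ θ : ℝ, φ (q θ) = φ (q 0) * Complex.exp (θ * Complex.I)) : ¬IsLogBranchOn L φ s := by
  intro hL
  have hlin : IsLogBranchOn (fun θ : ℝ => L (q 0) + θ * Complex.I) (φ ∘ q) univ :=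
    ⟨by fun_prop, fun θ _ => by
      rw [Complex.exp_add, hL.2 _ (hqs 0), Function.comp_apply, hφ θ]⟩
  have hsub := (hL.comp hq.continuousOn fun θ _ => hqs θ).sub_eq_sub isPreconnected_univ hlin
    (mem_univ 0) (mem_univ (2 * Real.pi))
  simp [hloop] at hsub

lemma exists_isLogBranchOn_pencil (hΩ : IsOpen Ω) (hΩc : CConvex Ω) {N : Submodule ℂ V}
    (hN : Disjoint (N : Set V) Ω) {ζ : ℂ → V} (hζ : Continuous ζ)
    (hmeet : ∀ τ, ∃ (c : ℂ) (m : N), c • ζ τ + (m : V) ∈ Ω) :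
    ∃ L, IsLogBranchOn L (fun q : ℂ × ℂ × N => q.2.1) {q | q.2.1 • ζ q.1 + (q.2.2 : V) ∈ Ω} := by
  refine exists_isLogBranchOn_of_cConvex_fibers (hΩ.preimage (by fun_prop)) (fun τ => ?_)
    (fun τ => ?_) (by fun_prop) ?_
  · exact hΩc.preimage_clm ((ContinuousLinearMap.toSpanSingleton ℂ (ζ τ)).coprod N.subtypeL)
  · obtain ⟨c, m, h⟩ := hmeet τ
    exact ⟨(c, m), h⟩
  · rintro ⟨τ, c, m⟩ hq (rfl : c = 0)
    exact disjoint_left.1 hN m.2 (by simpa using hq)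

/-- If every member of the pencil met `Ω`, the coefficient `c` of a point of `Ω` would have a
logarithm over the disc of directions `τ • e₁ + (1 - ‖τ‖) • e₂`, whereas it winds once around `0`
as `τ` runs around the unit circle, where the direction stays on the line of `e₁`. -/
lemma exists_disjoint_sup_span_pencil (hΩ : IsOpen Ω) (hΩc : CConvex Ω) {N : Submodule ℂ V}
    (hN : Disjoint (N : Set V) Ω) (e₁ e₂ : V) :
    ∃ a b : ℂ, (a ≠ 0 ∨ b ≠ 0) ∧
      Disjoint ((N ⊔ Submodule.span ℂ {a • e₁ + b • e₂} : Submodule ℂ V) : Set V) Ω := by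
  by_contra! hcon
  have hmeet (a b : ℂ) (hab : a ≠ 0 ∨ b ≠ 0) :
      ∃ (c : ℂ) (m : N), c • (a • e₁ + b • e₂) + (m : V) ∈ Ω := by
    obtain ⟨x, hx, hxΩ⟩ := not_disjoint_iff.1 (hcon a b hab)
    obtain ⟨m, hm, w, hw, rfl⟩ := Submodule.mem_sup.1 hx
    obtain ⟨c, rfl⟩ := Submodule.mem_span_singleton.1 hw
    exact ⟨c, ⟨m, hm⟩, by rwa [add_comm]⟩
  obtain ⟨L, hL⟩ := exists_isLogBranchOn_pencil hΩ hΩc hN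
    (ζ := fun τ => τ • e₁ + ((1 - ‖τ‖ : ℝ) : ℂ) • e₂) (by fun_prop) fun τ =>
      hmeet τ _ <| by
        rcases eq_or_ne τ 0 with rfl | hτ
        · simp
        · exact .inl hτ
  obtain ⟨c₀, m₀, hc₀⟩ := hmeet 1 0 (by simp)
  refine not_isLogBranchOn_of_loop
    (q := fun θ : ℝ => (Complex.exp (-(θ * Complex.I)), c₀ * Complex.exp (θ * Complex.I), m₀))
    (by fun_prop) (fun θ => ?_) (by simp [Complex.exp_neg]) (by simp) hL
  have hnorm : ‖Complex.exp (-(θ * Complex.I))‖ = 1 := by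
    simpa using Complex.norm_exp_ofReal_mul_I (-θ)
  simpa [hnorm, smul_smul, mul_assoc, ← Complex.exp_add] using hc₀

lemma exists_maximal_submodule_disjoint {R M : Type*} [Semiring R] [AddCommMonoid M] [Module R M]
    {s : Set M} (h0 : (0 : M) ∉ s) :
    ∃ N : Submodule R M, Maximal (fun N : Submodule R M => Disjoint (N : Set M) s) N := by
  have hchain : ∀ c ⊆ {N : Submodule R M | Disjoint (N : Set M) s}, IsChain (· ≤ ·) c →
      ∀ N ∈ c, ∃ ub ∈ {N : Submodule R M | Disjoint (N : Set M) s}, ∀ N' ∈ c, N' ≤ ub := by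
    refine fun c hc hchain N hN => ⟨sSup c, disjoint_left.2 fun x hx => ?_, fun _ => le_sSup⟩
    obtain ⟨N', hN', hx'⟩ := (Submodule.mem_sSup_of_directed ⟨N, hN⟩ hchain.directedOn).1 hx
    exact disjoint_left.1 (hc hN') hx'
  obtain ⟨N, -, hN⟩ := zorn_le_nonempty₀ _ hchain ⊥ (by simpa using h0)
  exact ⟨N, hN⟩

lemma exists_linearMap_ne_zero (hΩ : IsOpen Ω) (hΩc : CConvex Ω) (h0 : (0 : V) ∉ Ω) :
    ∃ l : V →ₗ[ℂ] ℂ, ∀ x ∈ Ω, l x ≠ 0 := by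
  rcases Ω.eq_empty_or_nonempty with rfl | ⟨p, hp⟩
  · exact ⟨0, by simp⟩
  obtain ⟨N, hN, hmax⟩ := exists_maximal_submodule_disjoint (R := ℂ) h0
  obtain ⟨l, hlp, hlN⟩ := Submodule.exists_le_ker_of_notMem fun h => disjoint_left.1 hN h hp
  refine ⟨l, fun x hx hlx => ?_⟩
  obtain ⟨a, b, hab, hdisj⟩ := exists_disjoint_sup_span_pencil hΩ hΩc hN p x
  have hmem : a • p + b • x ∈ N :=
    hmax hdisj le_sup_left (le_sup_right (a := N) (Submodule.mem_span_singleton_self _))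
  have ha : a = 0 := by simpa [hlx, hlp] using hlN hmem
  have hb : b ≠ 0 := by simpa [ha] using hab
  have hxN : x ∈ N := (N.smul_mem_iff hb).1 (by simpa [ha] using hmem)
  exact disjoint_left.1 hN hxN hx

lemma continuous_of_forall_mem_ne_zero (hΩ : IsOpen Ω) (hne : Ω.Nonempty) {l : V →ₗ[ℂ] ℂ}
    (hl : ∀ x ∈ Ω, l x ≠ 0) : Continuous l := by
  refine l.continuous_iff_isClosed_ker.2 (l.isClosed_or_dense_ker.resolve_right fun hdense => ?_)
  obtain ⟨x, hx, hxl⟩ := hdense.inter_open_nonempty Ω hΩ hne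
  exact hl x hx hxl

theorem CConvex.exists_clm_ne (hΩ : IsOpen Ω) (hΩc : CConvex Ω) {q : V} (hq : q ∉ Ω) :
    ∃ l : V →L[ℂ] ℂ, ∀ x ∈ Ω, l x ≠ l q := by
  rcases Ω.eq_empty_or_nonempty with rfl | ⟨p, hp⟩
  · exact ⟨0, by simp⟩
  have hΩq : IsOpen ((· + q) ⁻¹' Ω) := hΩ.preimage (by fun_prop)
  obtain ⟨l, hl⟩ := exists_linearMap_ne_zero hΩq (hΩc.preimage_add_right q) (by simpa using hq)
  refine ⟨⟨l, continuous_of_forall_mem_ne_zero hΩq ⟨p - q, by simpa using hp⟩ hl⟩,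
    fun x hx hlx => hl (x - q) (by simpa using hx) ?_⟩
  simpa [sub_eq_zero] using hlx

end Hyperplane

section Kobayashi

variable {V : Type*} [NormedAddCommGroup V] [NormedSpace ℂ V] {Ω : Set V} {p v : V}

lemma IsLogBranchOn.eq_of_clm_eq (hΩc : CConvex Ω) {l : V →L[ℂ] ℂ} {a : ℂ} {L : V → ℂ}
    (hL : IsLogBranchOn L (fun x => l x - a) Ω) {x y : V} (hx : x ∈ Ω) (hy : y ∈ Ω)
    (hxy : l x = l y) : L x = L y := by
  have hslice := (cConvex_iff_isSimplyConnected.1 hΩc x hx (y - x)).isPathConnected.isConnected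
  have heq := (hL.comp (g := fun c : ℂ => x + c • (y - x)) (by fun_prop) fun c hc => hc).eq_of_eq
    hslice.isPreconnected (fun c _ c' _ => by simp [hxy]) (a := 0) (b := 1) (by simpa using hx)
    (by simpa using hy)
  simpa using heq

lemma norm_clm_deriv_le_four_mul (hΩ : IsOpen Ω) (hΩc : CConvex Ω) {f : ℂ → V}
    (hf : DifferentiableOn ℂ f (ball 0 1)) (hfΩ : MapsTo f (ball 0 1) Ω) {l : V →L[ℂ] ℂ} {a : ℂ}
    (hl : ∀ x ∈ Ω, l x ≠ a) : ‖l (deriv f 0)‖ ≤ 4 * ‖l (f 0) - a‖ := by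
  have h0 : (0 : ℂ) ∈ ball (0 : ℂ) 1 := mem_ball_self one_pos
  have hL := isLogBranchOn_logIncrement_add_log hΩ hΩc (φ := fun x => l x - a) (by fun_prop)
    (fun x hx => sub_ne_zero.2 (hl x hx)) (hfΩ h0)
  have hLf := hL.comp hf.continuousOn hfΩ
  have hderiv : HasDerivAt (fun z => l (f z) - a) (l (deriv f 0)) 0 :=
    (l.hasFDerivAt.comp_hasDerivAt 0
      (hf.differentiableAt (isOpen_ball.mem_nhds h0)).hasDerivAt).sub_const a
  rw [← hderiv.deriv]
  refine norm_deriv_le_four_mul_of_exp_eq ((l.differentiable.comp_differentiableOn hf).sub_const a)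
    hLf.1 hLf.2 fun z hz w hw hzw => hL.eq_of_clm_eq hΩc (hfΩ hz) (hfΩ hw) (sub_left_injective hzw)

lemma norm_le_mul_dist_of_notMem (hΩ : IsOpen Ω) (hΩc : CConvex Ω) {f : ℂ → V}
    (hf : DifferentiableOn ℂ f (ball 0 1)) (hfΩ : MapsTo f (ball 0 1) Ω) {ξ c : ℂ}
    (hq : f 0 + c • ξ • deriv f 0 ∉ Ω) :
    ‖ξ • deriv f 0‖ ≤ 4 * ‖ξ‖ * dist (f 0) (f 0 + c • ξ • deriv f 0) := by
  obtain ⟨l, hl⟩ := hΩc.exists_clm_ne hΩ hq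
  have hbound := norm_clm_deriv_le_four_mul hΩ hΩc hf hfΩ hl
  have hgap : l (f 0) - l (f 0 + c • ξ • deriv f 0) = -(c * ξ * l (deriv f 0)) := by
    simp [mul_assoc]
  have hpos : 0 < ‖l (deriv f 0)‖ := norm_pos_iff.2 fun h0 =>
    hl _ (hfΩ (mem_ball_self one_pos)) (sub_eq_zero.1 (by simp [h0]))
  rw [hgap, norm_neg, norm_mul, norm_mul] at hbound
  have hone : 1 ≤ 4 * ‖ξ‖ * ‖c‖ := le_of_mul_le_mul_right (by linarith) hpos
  rw [dist_self_add_right, norm_smul c, ← mul_assoc]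
  exact le_mul_of_one_le_left (norm_nonneg _) hone

lemma le_kobMetric (hΩ : IsOpen Ω) (hp : p ∈ Ω) {b : ℝ}
    (hb : ∀ (f : ℂ → V) (ξ : ℂ), DifferentiableOn ℂ f (ball 0 1) → MapsTo f (ball 0 1) Ω →
      f 0 = p → ξ • deriv f 0 = v → b ≤ ‖ξ‖) : b ≤ kobMetric Ω p v := by
  have h0 : (0 : ℂ) ∈ ball (0 : ℂ) 1 := mem_ball_self one_pos
  have hline : IsOpen {c : ℂ | p + c • v ∈ Ω} := hΩ.preimage (by fun_prop)
  obtain ⟨ε, hε, hball⟩ := Metric.isOpen_iff.1 hline 0 (by simpa using hp)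
  refine le_csInf ⟨_, fun z => p + (z * ε) • v, (ε : ℂ)⁻¹, by fun_prop, fun z hz => hball ?_,
    by simp, ?_, rfl⟩ ?_
  · simpa [abs_of_pos hε] using mul_lt_mul_of_pos_right (mem_ball_zero_iff.1 hz) hε
  · have hderiv : HasDerivAt (fun z : ℂ => p + (z * ε) • v) ((1 * (ε : ℂ)) • v) 0 :=
      (((hasDerivAt_id 0).mul_const _).smul_const v).const_add p
    rw [derivWithin_of_isOpen isOpen_ball h0, hderiv.deriv, one_mul,
      inv_smul_smul₀ (Complex.ofReal_ne_zero.2 hε.ne')]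
  · rintro r ⟨f, ξ, hf, hfΩ, hf0, hξ, rfl⟩
    exact hb f ξ hf hfΩ hf0 (by rwa [derivWithin_of_isOpen isOpen_ball h0] at hξ)

lemma nonempty_frontier_inter_line (hΩ : Bornology.IsBounded Ω) (hp : p ∈ Ω) (hv : v ≠ 0) :
    (frontier Ω ∩ {w | ∃ c : ℂ, w = p + c • v}).Nonempty := by
  have hline : Continuous fun c : ℂ => p + c • v := by fun_prop
  have hslice : {c : ℂ | p + c • v ∈ Ω} ≠ univ := by
    intro huniv
    obtain ⟨R, hR⟩ := hΩ.exists_norm_le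
    obtain ⟨c, hc⟩ := NormedSpace.exists_lt_norm ℂ ℂ ((R + ‖p‖) / ‖v‖)
    have hcR : ‖p + c • v‖ ≤ R := hR _ (huniv ▸ mem_univ c : c ∈ {c : ℂ | p + c • v ∈ Ω})
    rw [div_lt_iff₀ (norm_pos_iff.2 hv), ← norm_smul] at hc
    linarith [norm_le_add_norm_add (c • v) p, add_comm p (c • v) ▸ hcR]
  obtain ⟨c, hc⟩ := nonempty_frontier_iff.2 ⟨⟨0, by simpa using hp⟩, hslice⟩
  exact ⟨_, hline.frontier_preimage_subset Ω hc, c, rfl⟩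

end Kobayashi

theorem statement_15_general {V : Type*} [NormedAddCommGroup V] [NormedSpace ℂ V] {Ω : Set V}
    (hΩo : IsOpen Ω) (hcc : CConvex Ω) {p v : V} (hp : p ∈ Ω)
    (hne : (frontier Ω ∩ {w | ∃ c : ℂ, w = p + c • v}).Nonempty) :
    ‖v‖ / (4 * bdistDir Ω p v) ≤ kobMetric Ω p v := by
  refine le_kobMetric hΩo hp ?_
  rintro f ξ hf hfΩ rfl rfl
  rcases eq_or_ne ξ 0 with rfl | hξ
  · simp
  have hξ4 : 0 < 4 * ‖ξ‖ := by positivity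
  have hdist : ‖ξ • deriv f 0‖ / (4 * ‖ξ‖) ≤ bdistDir Ω (f 0) (ξ • deriv f 0) := by
    refine (Metric.le_infDist hne).2 ?_
    rintro _ ⟨hq, c, rfl⟩
    rw [div_le_iff₀' hξ4]
    exact norm_le_mul_dist_of_notMem hΩo hcc hf hfΩ (hΩo.frontier_eq ▸ hq).2
  refine div_le_of_le_mul₀ (mul_nonneg four_pos.le Metric.infDist_nonneg) (norm_nonneg ξ) ?_
  linarith [(div_le_iff₀' hξ4).1 hdist]

theorem statement_15 {n : ℕ}
    (Ω : Set (EuclideanSpace ℂ (Fin n)))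
    (hΩo : IsOpen Ω) (hΩc : IsConnected Ω) (hΩb : Bornology.IsBounded Ω)
    (hcc : CConvex Ω)
    (p : EuclideanSpace ℂ (Fin n)) (hp : p ∈ Ω) (v : EuclideanSpace ℂ (Fin n)) (hv : v ≠ 0) :
    ‖v‖ / (4 * bdistDir Ω p v) ≤ kobMetric Ω p v :=
  statement_15_general hΩo hcc hp (nonempty_frontier_inter_line hΩb hp hv)
end

section
/- Let Ω ⊂ ℂⁿ be a bounded ℂ-convex domain. Then for all distinct points p, q ∈ Ω, the Kobayashi distance satisfies K_Ω(p,q) ≥ ¼ |log(1 + |p−q| / min{δ_Ω(p;p−q), δ_Ω(q;p−q)})|. -/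
open Metric Set MeasureTheory Filter Topology

/-!
Let `ξ` be a boundary point of `Ω` on the complex line through `p` and `q` with
`‖p - ξ‖ = δ_Ω(p; p - q)`. Since the slices of `Ω` are simply connected, there is a functional `A`
with `A (x - ξ) ≠ 0` on `Ω`: if two functionals without a common zero on `Ω` had no nonvanishing
linear combination, logarithms along the fibres of their quotient would glue to a logarithm
contradicting the monodromy around a zero, so one can descend from the coordinates to a single
functional.

For a holomorphic disc `f` in `Ω`, connectedness of the slices makes a logarithm of `A (x - ξ)`
depend only on the value of `A (x - ξ)`, so `A (f - ξ)` has a square root `g` on the disc with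
`g z + g w ≠ 0` for all `z`, `w` (a Gelfer function). Then `‖g' 0‖ ≤ 2 ‖g 0‖`: on the sphere the
logarithmic energy of a measure is at least its mutual energy with its image under the half-turn
`w ↦ -w`, because the energies expand into integrals of positive definite kernels, while
subharmonicity of `log |(g (u z) - g z) / (g (u z) + g z)|` bounds the difference from below by the
derivative.

Hence the Kobayashi metric is at least `‖A v‖ / (4 ‖A (x - ξ)‖)`, and integrating along curves
gives the logarithm, as `‖A (p - q)‖ / ‖A (p - ξ)‖ = ‖p - q‖ / ‖p - ξ‖` on the line.
-/

section Logarithm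

variable {X Y : Type*} [TopologicalSpace X] [TopologicalSpace Y]

/-- `f` admits a continuous logarithm on the set `s`. -/
def HasContinuousLogOn (f : X → ℂ) (s : Set X) : Prop :=
  ∃ l : X → ℂ, ContinuousOn l s ∧ ∀ x ∈ s, Complex.exp (l x) = f x

theorem HasContinuousLogOn.of_restrict {f : X → ℂ} {s : Set X}
    (h : HasContinuousLogOn (fun x : s ↦ f x) univ) : HasContinuousLogOn f s := by
  classical
  obtain ⟨l, hl, hexp⟩ := h
  refine ⟨fun x ↦ if hx : x ∈ s then l ⟨x, hx⟩ else 0, ?_, fun x hx ↦ ?_⟩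
  · rw [continuousOn_iff_continuous_domRestrict]
    refine (continuousOn_univ.mp hl).congr fun x ↦ ?_
    simp [domRestrict]
  · simpa [hx] using hexp ⟨x, hx⟩ (mem_univ _)

theorem HasContinuousLogOn.comp {f : X → ℂ} {s : Set X} (h : HasContinuousLogOn f s) {g : Y → X}
    {t : Set Y} (hg : ContinuousOn g t) (hst : MapsTo g t s) :
    HasContinuousLogOn (fun y ↦ f (g y)) t := by
  obtain ⟨l, hl, hexp⟩ := h
  exact ⟨fun y ↦ l (g y), hl.comp hg hst, fun y hy ↦ hexp _ (hst hy)⟩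

theorem HasContinuousLogOn.const_mul {f : X → ℂ} {s : Set X} (h : HasContinuousLogOn f s)
    {c : ℂ} (hc : c ≠ 0) : HasContinuousLogOn (fun x ↦ c * f x) s := by
  obtain ⟨l, hl, hexp⟩ := h
  refine ⟨fun x ↦ Complex.log c + l x, by fun_prop, fun x hx ↦ ?_⟩
  rw [Complex.exp_add, Complex.exp_log hc, hexp x hx]

theorem isDiscrete_setOf_exp_eq_one : IsDiscrete {z : ℂ | Complex.exp z = 1} :=
  ⟨(Complex.isCoveringMapOn_exp 1 (by simp)).1⟩

theorem sub_eq_sub_of_exp_sub_eq {S : Set X} (hS : IsPreconnected S) {f g : X → ℂ}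
    (hf : ContinuousOn f S) (hg : ContinuousOn g S) {c : ℂ}
    (h : ∀ x ∈ S, Complex.exp (f x - g x) = c) {x y : X} (hx : x ∈ S) (hy : y ∈ S) :
    f x - g x = f y - g y := by
  refine sub_eq_zero.mp ?_
  have := hS.constant_of_mapsTo isDiscrete_setOf_exp_eq_one
    (f := fun u ↦ f u - g u - (f y - g y)) (by fun_prop) (fun u hu ↦ ?_) hx hy
  · simpa using this
  · simp only [mem_ofPred_eq, Complex.exp_sub (f u - g u), h u hu, h y hy]
    exact div_self (h y hy ▸ Complex.exp_ne_zero _)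

theorem not_hasContinuousLogOn_id_sphere {r : ℝ} (hr : 0 < r) :
    ¬ HasContinuousLogOn (fun z : ℂ ↦ z) (sphere 0 r) := by
  rintro ⟨l, hl, hexp⟩
  have hmem (θ : ℝ) : (r * Complex.exp (θ * Complex.I) : ℂ) ∈ sphere (0 : ℂ) r := by
    simp [Complex.norm_exp_ofReal_mul_I, hr.le]
  have hcont : Continuous fun θ : ℝ ↦ l (r * Complex.exp (θ * Complex.I)) :=
    hl.comp_continuous (by fun_prop) hmem
  have := sub_eq_sub_of_exp_sub_eq isPreconnected_univ (c := r) hcont.continuousOn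
    (g := fun θ : ℝ ↦ (θ * Complex.I : ℂ)) (by fun_prop)
    (fun θ _ ↦ by rw [Complex.exp_sub, hexp _ (hmem θ)]; field_simp [Complex.exp_ne_zero])
    (mem_univ 0) (mem_univ (2 * Real.pi))
  simp [Complex.exp_two_pi_mul_I, eq_sub_iff_add_eq] at this

theorem hasContinuousLogOn_of_isSimplyConnected {U : Set ℂ} (hU : IsSimplyConnected U)
    (hUo : IsOpen U) {f : ℂ → ℂ} (hf : ContinuousOn f U) (h0 : ∀ z ∈ U, f z ≠ 0) :
    HasContinuousLogOn f U := by
  obtain ⟨l, hl, hexp⟩ := Complex.exists_continuousOn_eqOn_exp_comp hU hUo hf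
    (by rintro ⟨z, hz, hz0⟩; exact h0 z hz hz0)
  exact ⟨l, hl, hexp⟩

section Fibers

variable {W : Set (Y × ℂ)} {Φ : Y × ℂ → ℂ}

theorem eventually_forall_mem_and_div_mem_slitPlane (hW : IsOpen W) (hΦ : ContinuousOn Φ W)
    (h0 : ∀ w ∈ W, Φ w ≠ 0) {K : Set ℂ} (hK : IsCompact K) {y : Y} (hKW : ∀ ζ ∈ K, (y, ζ) ∈ W) :
    ∀ᶠ y' in 𝓝 y, ∀ ζ ∈ K, (y', ζ) ∈ W ∧ Φ (y', ζ) / Φ (y, ζ) ∈ Complex.slitPlane := by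
  refine hK.eventually_forall_of_forall_eventually fun ζ hζ ↦ ?_
  have hy := hW.mem_nhds (hKW ζ hζ)
  have hratio : ContinuousAt (fun w : Y × ℂ ↦ Φ w / Φ (y, w.2)) (y, ζ) := by
    refine (hΦ.continuousAt hy).div ?_ (h0 _ (hKW ζ hζ))
    exact (hΦ.continuousAt hy).comp' (f := fun w : Y × ℂ ↦ (y, w.2)) (by fun_prop)
  refine (eventually_mem_set.mpr hy).and
    (hratio.eventually (Complex.isOpen_slitPlane.mem_nhds ?_))
  simp [div_self (h0 _ (hKW ζ hζ))]

theorem log_sub_log_eq_of_div_mem_slitPlane {K : Set ℂ} (hK : IsPreconnected K) {f g l m : ℂ → ℂ}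
    (hf : ContinuousOn f K) (hg : ContinuousOn g K) (hl : ContinuousOn l K)
    (hm : ContinuousOn m K) (hlf : ∀ ζ ∈ K, Complex.exp (l ζ) = f ζ)
    (hmg : ∀ ζ ∈ K, Complex.exp (m ζ) = g ζ) (hfg : ∀ ζ ∈ K, f ζ / g ζ ∈ Complex.slitPlane)
    {a b : ℂ} (ha : a ∈ K) (hb : b ∈ K) :
    l b - l a = m b - m a + (Complex.log (f b / g b) - Complex.log (f a / g a)) := by
  have hg0 : ∀ ζ ∈ K, g ζ ≠ 0 := fun ζ hζ ↦ hmg ζ hζ ▸ Complex.exp_ne_zero _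
  have hf0 : ∀ ζ ∈ K, f ζ ≠ 0 := fun ζ hζ ↦ hlf ζ hζ ▸ Complex.exp_ne_zero _
  have := sub_eq_sub_of_exp_sub_eq hK hl (c := 1)
    (g := fun ζ ↦ m ζ + Complex.log (f ζ / g ζ)) (hm.add ((hf.div hg hg0).clog hfg))
    (fun ζ hζ ↦ ?_) hb ha
  · linear_combination this
  · rw [Complex.exp_sub, Complex.exp_add, hlf ζ hζ, hmg ζ hζ,
      Complex.exp_log (div_ne_zero (hf0 ζ hζ) (hg0 ζ hζ))]
    field_simp [hf0 ζ hζ, hg0 ζ hζ]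

theorem continuousAt_log_fiber_sub (hW : IsOpen W) (hΦ : ContinuousOn Φ W)
    {l : Y → ℂ → ℂ} (hl : ∀ y, ContinuousOn (l y) {ζ | (y, ζ) ∈ W})
    (hexp : ∀ y, ∀ ζ ∈ {ζ | (y, ζ) ∈ W}, Complex.exp (l y ζ) = Φ (y, ζ)) {y : Y} {a b : ℂ}
    (hab : JoinedIn {ζ | (y, ζ) ∈ W} a b) : ContinuousAt (fun y' ↦ l y' b - l y' a) y := by
  have h0 (w) (hw : w ∈ W) : Φ w ≠ 0 := hexp w.1 w.2 hw ▸ Complex.exp_ne_zero _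
  have hΦfib (y : Y) : ContinuousOn (fun ζ ↦ Φ (y, ζ)) {ζ | (y, ζ) ∈ W} :=
    hΦ.comp (by fun_prop) fun _ hζ ↦ hζ
  obtain ⟨γ, hγ⟩ := hab
  have hKW : ∀ ζ ∈ range γ, (y, ζ) ∈ W := forall_mem_range.mpr hγ
  have haK : a ∈ range γ := ⟨0, γ.source⟩
  have hbK : b ∈ range γ := ⟨1, γ.target⟩
  have hlocal : (fun y' ↦ l y b - l y a + (Complex.log (Φ (y', b) / Φ (y, b)) -
      Complex.log (Φ (y', a) / Φ (y, a)))) =ᶠ[𝓝 y] fun y' ↦ l y' b - l y' a := by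
    filter_upwards [eventually_forall_mem_and_div_mem_slitPlane hW hΦ h0
      (isCompact_range γ.continuous) hKW] with y' hy'
    have hKW' : ∀ ζ ∈ range γ, (y', ζ) ∈ W := fun ζ hζ ↦ (hy' ζ hζ).1
    exact (log_sub_log_eq_of_div_mem_slitPlane (isPreconnected_range γ.continuous)
      ((hΦfib y').mono hKW') ((hΦfib y).mono hKW) ((hl y').mono hKW') ((hl y).mono hKW)
      (fun ζ hζ ↦ hexp y' ζ (hKW' ζ hζ)) (fun ζ hζ ↦ hexp y ζ (hKW ζ hζ))
      (fun ζ hζ ↦ (hy' ζ hζ).2) haK hbK).symm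
  have hlog {c : ℂ} (hc : (y, c) ∈ W) :
      ContinuousAt (fun y' ↦ Complex.log (Φ (y', c) / Φ (y, c))) y := by
    have hcont : ContinuousAt (fun y' ↦ Φ (y', c)) y :=
      (hΦ.continuousAt (hW.mem_nhds hc)).comp' (f := fun y' ↦ (y', c)) (by fun_prop)
    exact (hcont.div_const _).clog (by simp [div_self (h0 _ hc)])
  exact (continuousAt_const.add ((hlog (hKW b hbK)).sub (hlog (hKW a haK)))).congr hlocal

theorem hasContinuousLogOn_div_of_isSimplyConnected_fibers (hW : IsOpen W)
    (hsc : ∀ y, IsSimplyConnected {ζ | (y, ζ) ∈ W}) (hΦ : ContinuousOn Φ W)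
    (h0 : ∀ w ∈ W, Φ w ≠ 0) {a b : ℂ} (ha : ∀ y, (y, a) ∈ W) (hb : ∀ y, (y, b) ∈ W) :
    HasContinuousLogOn (fun y ↦ Φ (y, b) / Φ (y, a)) univ := by
  have hΦfib (y : Y) : ContinuousOn (fun ζ ↦ Φ (y, ζ)) {ζ | (y, ζ) ∈ W} :=
    hΦ.comp (by fun_prop) fun _ hζ ↦ hζ
  choose l hl hexp using fun y ↦ hasContinuousLogOn_of_isSimplyConnected (hsc y)
    (hW.preimage (by fun_prop)) (hΦfib y) fun ζ hζ ↦ h0 _ hζ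
  refine ⟨fun y ↦ l y b - l y a, continuousOn_univ.mpr ?_, fun y _ ↦ ?_⟩
  · exact continuous_iff_continuousAt.mpr fun y ↦ continuousAt_log_fiber_sub hW hΦ hl hexp
      ((hsc y).isPathConnected.joinedIn a (ha y) b (hb y))
  · rw [Complex.exp_sub, hexp y b (hb y), hexp y a (ha y)]

end Fibers

section Gluing

variable {ι : Type*} {T : X → Y} {f : X → ℂ}

/-- The pullback of a partition of unity along a continuous map. -/
def partitionOfUnityComp (φ : PartitionOfUnity ι Y univ) (T : C(X, Y)) :
    PartitionOfUnity ι X univ where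
  toFun i := (φ i).comp T
  locallyFinite' := φ.locallyFinite.preimage_continuous T.continuous
  nonneg' i x := φ.nonneg i (T x)
  sum_eq_one' x _ := φ.sum_eq_one (mem_univ (T x))
  sum_le_one' x := φ.sum_le_one (T x)

theorem finsum_smul_sub_finsum_smul_eq (φ : PartitionOfUnity ι Y univ) {j : Y} {u v : ι → ℂ} {c : ℂ}
    (h : ∀ i, φ i j ≠ 0 → u i - v i = c) :
    (∑ᶠ i, φ i j • u i) - ∑ᶠ i, φ i j • v i = c := by
  have hfin (w : ι → ℂ) : (Function.support fun i ↦ φ i j • w i).Finite :=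
    (φ.locallyFinite.point_finite j).subset fun i hi hφi ↦ hi (by simp [hφi])
  rw [← finsum_sub_distrib (hfin u) (hfin v), ← one_smul ℝ c, ← φ.sum_eq_one (mem_univ j),
    finsum_smul]
  refine finsum_congr fun i ↦ ?_
  rw [← smul_sub]
  rcases eq_or_ne (φ i j) 0 with hi | hi
  · rw [hi, zero_smul, zero_smul]
  · rw [h i hi]

theorem exists_continuous_exp_div_eq_on_fibers [NormalSpace Y] [ParacompactSpace Y]
    (hT : Continuous T) (hfib : ∀ y, IsPreconnected (T ⁻¹' {y}))
    (hloc : ∀ y, ∃ V ∈ 𝓝 y, HasContinuousLogOn f (T ⁻¹' V)) :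
    ∃ m : X → ℂ, Continuous m ∧
      ∀ x y, T x = T y → Complex.exp (m x) / f x = Complex.exp (m y) / f y := by
  choose V hV l hl hexp using hloc
  obtain ⟨φ, hφ⟩ := PartitionOfUnity.exists_isSubordinate isClosed_univ (fun y ↦ interior (V y))
    (fun _ ↦ isOpen_interior) fun y _ ↦ mem_iUnion.mpr ⟨y, mem_interior_iff_mem_nhds.mpr (hV y)⟩
  have hVφ {i y : Y} (h : φ i y ≠ 0) : y ∈ V i := interior_subset (hφ i (subset_tsupport _ h))
  refine ⟨fun x ↦ ∑ᶠ i, φ i (T x) • l i x, ?_, fun x y hxy ↦ ?_⟩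
  · refine (partitionOfUnityComp φ ⟨T, hT⟩).continuous_finsum_smul fun i x hx ↦ ?_
    have hx' : T x ∈ interior (V i) := hφ i (tsupport_comp_subset_preimage (φ i) hT hx)
    exact ((hl i).mono (preimage_mono interior_subset)).continuousAt
      ((isOpen_interior.preimage hT).mem_nhds hx')
  -- Any two of the local logarithms differ by a constant along the fibre through `x` and `y`.
  · set j := T x
    have hjV : T ⁻¹' {j} ⊆ T ⁻¹' V j := preimage_mono (by simpa using mem_of_mem_nhds (hV j))
    have hx : x ∈ T ⁻¹' {j} := rfl
    have hy : y ∈ T ⁻¹' {j} := hxy.symm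
    have hl_sub {i : Y} (hi : φ i j ≠ 0) : l i x - l i y = l j x - l j y := by
      have hiV : T ⁻¹' {j} ⊆ T ⁻¹' V i := preimage_mono (by simpa using hVφ hi)
      have := sub_eq_sub_of_exp_sub_eq (hfib j) ((hl i).mono hiV) ((hl j).mono hjV) (c := 1)
        (fun u hu ↦ by
          rw [Complex.exp_sub, hexp i u (hiV hu), ← hexp j u (hjV hu),
            div_self (Complex.exp_ne_zero _)]) hx hy
      linear_combination this
    have hm_sub : (∑ᶠ i, φ i j • l i x) - ∑ᶠ i, φ i (T y) • l i y = l j x - l j y := by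
      rw [← hxy]
      exact finsum_smul_sub_finsum_smul_eq φ fun i hi ↦ hl_sub hi
    rw [sub_eq_sub_iff_add_eq_add] at hm_sub
    have hsum := congrArg Complex.exp hm_sub
    rw [Complex.exp_add, Complex.exp_add, hexp j x (hjV hx), hexp j y (hjV hy)] at hsum
    have hfx : f x ≠ 0 := hexp j x (hjV hx) ▸ Complex.exp_ne_zero _
    have hfy : f y ≠ 0 := hexp j y (hjV hy) ▸ Complex.exp_ne_zero _
    rw [div_eq_div_iff hfx hfy, hsum, mul_comm]

theorem hasContinuousLogOn_of_isQuotientMap [NormalSpace Y] [ParacompactSpace Y]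
    (hT : IsQuotientMap T) (hfib : ∀ y, IsPreconnected (T ⁻¹' {y}))
    (hY : ∀ h : Y → ℂ, Continuous h → (∀ y, h y ≠ 0) → HasContinuousLogOn h univ)
    (hf : Continuous f) (hloc : ∀ y, ∃ V ∈ 𝓝 y, HasContinuousLogOn f (T ⁻¹' V)) :
    HasContinuousLogOn f univ := by
  have hf0 (x : X) : f x ≠ 0 := by
    obtain ⟨V, hV, l, -, hexp⟩ := hloc (T x)
    exact hexp x (mem_preimage.mpr (mem_of_mem_nhds hV)) ▸ Complex.exp_ne_zero _
  obtain ⟨m, hm, hm_fib⟩ := exists_continuous_exp_div_eq_on_fibers hT.continuous hfib hloc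
  let h : C(Y, ℂ) := IsQuotientMap.lift (f := ⟨T, hT.continuous⟩) hT
    ⟨fun x ↦ Complex.exp (m x) / f x, by fun_prop (disch := exact hf0 _)⟩ hm_fib
  have hh (x : X) : h (T x) = Complex.exp (m x) / f x :=
    DFunLike.congr_fun (IsQuotientMap.lift_comp (f := ⟨T, hT.continuous⟩) hT
      ⟨fun x ↦ Complex.exp (m x) / f x, by fun_prop (disch := exact hf0 _)⟩ hm_fib) x
  obtain ⟨H, hH, hHexp⟩ := hY h h.continuous fun y ↦ by
    obtain ⟨x, rfl⟩ := hT.surjective y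
    exact hh x ▸ div_ne_zero (Complex.exp_ne_zero _) (hf0 x)
  refine ⟨fun x ↦ m x - H (T x), ?_, fun x _ ↦ ?_⟩
  · exact (hm.sub ((continuousOn_univ.mp hH).comp hT.continuous)).continuousOn
  · rw [Complex.exp_sub, hHexp _ (mem_univ _), hh]
    field_simp [Complex.exp_ne_zero]

end Gluing

end Logarithm

section Slices

variable {E F : Type*} [NormedAddCommGroup E] [NormedSpace ℂ E] [NormedAddCommGroup F]
  [NormedSpace ℂ F] {Ω : Set E}

/-- Every slice of `Ω` by a complex line through one of its points, parametrised by that line, is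
simply connected. A constant parametrisation `v = 0` is allowed, so that the notion is stable under
affine preimages. -/
def HasSimplyConnectedSlices (Ω : Set E) : Prop :=
  ∀ z ∈ Ω, ∀ v : E, IsSimplyConnected {c : ℂ | z + c • v ∈ Ω}

theorem CConvex.hasSimplyConnectedSlices (hΩ : CConvex Ω) : HasSimplyConnectedSlices Ω := by
  intro z hz v
  rcases eq_or_ne v 0 with rfl | hv
  · have huniv : {c : ℂ | z + c • (0 : E) ∈ Ω} = univ := by simp [hz]
    rw [huniv]
    exact (Homeomorph.Set.univ ℂ).toHomotopyEquiv.simplyConnectedSpace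
  · have hemb : IsEmbedding fun c : ℂ ↦ z + c • v :=
      (Homeomorph.addLeft z).isEmbedding.comp (isClosedEmbedding_smul_left hv).isEmbedding
    rw [← hemb.isSimplyConnected_image]
    have himage : (fun c : ℂ ↦ z + c • v) '' {c | z + c • v ∈ Ω} =
        Ω ∩ {w | ∃ c : ℂ, w = z + c • v} := by
      ext w
      constructor
      · rintro ⟨c, hc, rfl⟩
        exact ⟨hc, c, rfl⟩
      · rintro ⟨hw, c, rfl⟩
        exact ⟨c, hw, rfl⟩
    rw [himage]
    exact (hΩ z v hv ⟨z, hz, 0, by simp⟩).2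

namespace HasSimplyConnectedSlices

theorem preimage_affineMap (hΩ : HasSimplyConnectedSlices Ω) (φ : F →ᵃ[ℂ] E) :
    HasSimplyConnectedSlices (φ ⁻¹' Ω) := by
  intro z hz v
  convert hΩ (φ z) hz (φ.linear v) using 3 with c
  rw [mem_preimage, add_comm z, ← vadd_eq_add, φ.map_vadd, map_smul, vadd_eq_add, add_comm]

theorem isPreconnected_inter (hΩ : HasSimplyConnectedSlices Ω) (V : Submodule ℂ E) :
    IsPreconnected (Ω ∩ V) := by
  refine isPreconnected_of_forall_pair fun x hx y hy ↦ ?_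
  refine ⟨(fun c : ℂ ↦ x + c • (y - x)) '' {c | x + c • (y - x) ∈ Ω}, ?_, ⟨0, by simp [hx.1]⟩,
    ⟨1, by simp [hy.1]⟩, ?_⟩
  · rintro _ ⟨c, hc, rfl⟩
    exact ⟨hc, V.add_mem hx.2 (V.smul_mem c (V.sub_mem hy.2 hx.2))⟩
  · exact (hΩ x hx.1 (y - x)).isPathConnected.isConnected.isPreconnected.image _ (by fun_prop)

theorem isPreconnected (hΩ : HasSimplyConnectedSlices Ω) : IsPreconnected Ω := by
  simpa using hΩ.isPreconnected_inter ⊤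

theorem hasContinuousLogOn_div (hΩ : HasSimplyConnectedSlices Ω) (ho : IsOpen Ω) {f : E → ℂ}
    (hf : ContinuousOn f Ω) {U : Set E} (hU : U ⊆ Ω) {c : E → E} (hc : ContinuousOn c U)
    (hcΩ : MapsTo c U Ω)
    (hne : ∀ y ∈ U, ∀ ζ : ℂ, c y + ζ • (y - c y) ∈ Ω → f (c y + ζ • (y - c y)) ≠ 0) :
    HasContinuousLogOn (fun y ↦ f y / f (c y)) U := by
  have hcU : Continuous fun y : U ↦ c y := continuousOn_iff_continuous_domRestrict.mp hc
  let line : U × ℂ → E := fun w ↦ c w.1 + w.2 • ((w.1 : E) - c w.1)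
  have hline : Continuous line := by
    have hc₁ : Continuous fun w : U × ℂ ↦ c w.1 := hcU.comp continuous_fst
    exact hc₁.add (continuous_snd.smul ((continuous_subtype_val.comp continuous_fst).sub hc₁))
  refine HasContinuousLogOn.of_restrict ?_
  have := hasContinuousLogOn_div_of_isSimplyConnected_fibers (W := line ⁻¹' Ω)
    (Φ := f ∘ line) (a := 0) (b := 1) (ho.preimage hline)
    (fun y ↦ hΩ (c y) (hcΩ y.2) (y - c y)) (hf.comp hline.continuousOn fun _ hw ↦ hw)
    (fun w hw ↦ hne w.1 w.1.2 w.2 hw) (fun y ↦ by simpa [line] using hcΩ y.2)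
    (fun y ↦ by simpa [line] using hU y.2)
  simpa [line] using this

theorem hasContinuousLogOn (hΩ : HasSimplyConnectedSlices Ω) (ho : IsOpen Ω) {f : E → ℂ}
    (hf : ContinuousOn f Ω) (h0 : ∀ x ∈ Ω, f x ≠ 0) : HasContinuousLogOn f Ω := by
  rcases Ω.eq_empty_or_nonempty with rfl | ⟨p, hp⟩
  · exact ⟨0, by simp, by simp⟩
  · convert (hΩ.hasContinuousLogOn_div ho hf subset_rfl continuousOn_const (fun _ _ ↦ hp)
      fun _ _ _ h ↦ h0 _ h).const_mul (h0 p hp) using 2 with x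
    exact (mul_div_cancel₀ _ (h0 p hp)).symm

end HasSimplyConnectedSlices

section Ratio

variable {A B : E →L[ℂ] ℂ}

/-- A local section of `B / A` through `x`, moving parallel to a vector `e` with `A e = 0` and
`B e = 1`. -/
noncomputable def ratioSection (A B : E →L[ℂ] ℂ) (e x : E) (t : ℂ) : E :=
  x + (A x * t - B x) • e

theorem continuous_ratioSection (e x : E) : Continuous (ratioSection A B e x) := by
  unfold ratioSection
  fun_prop

theorem map_ratioSection {e : E} (hAe : A e = 0) (x : E) (t : ℂ) :
    A (ratioSection A B e x t) = A x := by
  simp [ratioSection, hAe]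

theorem div_map_ratioSection {e : E} (hAe : A e = 0) (hBe : B e = 1) {x : E} (hx : A x ≠ 0)
    (t : ℂ) : B (ratioSection A B e x t) / A (ratioSection A B e x t) = t := by
  rw [map_ratioSection hAe, div_eq_iff hx]
  simp only [ratioSection, map_add, map_smul, hBe, smul_eq_mul]
  ring

theorem ratioSection_div {x : E} (hx : A x ≠ 0) (e : E) :
    ratioSection A B e x (B x / A x) = x := by
  simp [ratioSection, mul_div_cancel₀ _ hx]

theorem isOpenMap_div {e : E} (hAe : A e = 0) (hBe : B e = 1) {X : Set E} (hX : IsOpen X)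
    (hAX : ∀ x ∈ X, A x ≠ 0) : IsOpenMap fun x : X ↦ B x / A x := by
  refine IsOpenMap.of_nhds_le fun ⟨x, hx⟩ ↦ ?_
  have hAx := hAX x hx
  have hsec : map (ratioSection A B e x) (𝓝 (B x / A x)) ≤ 𝓝 x := by
    have := (continuous_ratioSection (A := A) (B := B) e x).tendsto (B x / A x)
    rwa [ratioSection_div hAx] at this
  calc 𝓝 (B x / A x)
      = map (fun y ↦ B y / A y) (map (ratioSection A B e x) (𝓝 (B x / A x))) := by
        simp [Filter.map_map, Function.comp_def, div_map_ratioSection hAe hBe hAx]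
    _ ≤ map (fun y ↦ B y / A y) (𝓝 x) := map_mono hsec
    _ = map (fun y : X ↦ B y / A y) (𝓝 ⟨x, hx⟩) := by
        rw [← map_nhds_subtype_coe_eq_nhds hx (hX.mem_nhds hx), Filter.map_map]
        rfl

theorem mem_ker_sub_smul_iff_div_eq {x : E} (hx : A x ≠ 0) {t : ℂ} :
    x ∈ (B - t • A).ker ↔ B x / A x = t := by
  simp [sub_eq_zero, div_eq_iff hx]

theorem image_preimage_div_eq_inter_ker (hAB : ∀ x ∈ Ω, A x = 0 → B x ≠ 0) (t : ℂ) :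
    ((↑) : {x ∈ Ω | A x ≠ 0} → E) '' ((fun x ↦ B x / A x) ⁻¹' {t}) =
      Ω ∩ (B - t • A).ker := by
  ext x
  constructor
  · rintro ⟨⟨x, hxΩ, hx⟩, hxt, rfl⟩
    exact ⟨hxΩ, (mem_ker_sub_smul_iff_div_eq hx).mpr hxt⟩
  · rintro ⟨hxΩ, hxt⟩
    have hx : A x ≠ 0 := fun h ↦ hAB x hxΩ h (by simpa [h] using hxt)
    exact ⟨⟨x, hxΩ, hx⟩, (mem_ker_sub_smul_iff_div_eq hx).mp hxt, rfl⟩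

theorem hasContinuousLogOn_of_ratioSection_mem (hΩ : HasSimplyConnectedSlices Ω) (ho : IsOpen Ω)
    (hAB : ∀ x ∈ Ω, A x = 0 → B x ≠ 0) {e : E} (hAe : A e = 0) (hBe : B e = 1) {x : E}
    (hx : A x ≠ 0) :
    HasContinuousLogOn A {y ∈ Ω | A y ≠ 0 ∧ ratioSection A B e x (B y / A y) ∈ Ω} := by
  have hAc (y : E) : A (ratioSection A B e x (B y / A y)) = A x := map_ratioSection hAe _ _
  convert (hΩ.hasContinuousLogOn_div ho A.continuous.continuousOn
    (U := {y ∈ Ω | A y ≠ 0 ∧ ratioSection A B e x (B y / A y) ∈ Ω})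
    (c := fun y ↦ ratioSection A B e x (B y / A y)) (fun y hy ↦ hy.1) ?_ (fun y hy ↦ hy.2.2)
    ?_).const_mul hx using 2 with y
  · rw [hAc, mul_div_cancel₀ _ hx]
  · exact (continuous_ratioSection e x).comp_continuousOn
      (B.continuous.continuousOn.div A.continuous.continuousOn fun y hy ↦ hy.2.1)
  · intro y hy ζ hζ hA
    have hc_ker := (mem_ker_sub_smul_iff_div_eq ((hAc y).trans_ne hx)).mpr
      (div_map_ratioSection hAe hBe hx (B y / A y))
    have hy_ker := (mem_ker_sub_smul_iff_div_eq (A := A) (B := B) hy.2.1).mpr rfl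
    have hB :=
      Submodule.add_mem _ hc_ker (Submodule.smul_mem _ ζ (Submodule.sub_mem _ hy_ker hc_ker))
    exact hAB _ hζ hA (by simpa [-map_add, hA] using hB)

theorem hasContinuousLogOn_setOf_ne_zero (hΩ : HasSimplyConnectedSlices Ω) (ho : IsOpen Ω)
    (hAB : ∀ x ∈ Ω, A x = 0 → B x ≠ 0) {e : E} (hAe : A e = 0) (hBe : B e = 1)
    (hsurj : ∀ t : ℂ, ∃ x ∈ Ω, B x = t * A x) : HasContinuousLogOn A {x ∈ Ω | A x ≠ 0} := by
  have hX : IsOpen {x ∈ Ω | A x ≠ 0} := ho.inter (isOpen_ne.preimage A.continuous)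
  have hex (t : ℂ) : ∃ x ∈ Ω, A x ≠ 0 ∧ B x / A x = t := by
    obtain ⟨x, hx, hBx⟩ := hsurj t
    have hAx : A x ≠ 0 := fun h ↦ hAB x hx h (by rw [hBx, h, mul_zero])
    exact ⟨x, hx, hAx, by rw [hBx, mul_div_cancel_right₀ _ hAx]⟩
  let T : {x ∈ Ω | A x ≠ 0} → ℂ := fun x ↦ B x / A x
  have hTc : Continuous T := by
    unfold T
    fun_prop (disch := exact fun x ↦ x.2.2)
  have hT : IsQuotientMap T := (isOpenMap_div hAe hBe hX fun x hx ↦ hx.2).isQuotientMap hTc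
    fun t ↦ (hex t).elim fun x hx ↦ ⟨⟨x, hx.1, hx.2.1⟩, hx.2.2⟩
  refine HasContinuousLogOn.of_restrict (hasContinuousLogOn_of_isQuotientMap hT (fun t ↦ ?_)
    (fun h hh h0 ↦ ?_) (by fun_prop) fun t ↦ ?_)
  · rw [← IsInducing.subtypeVal.isPreconnected_image, image_preimage_div_eq_inter_ker hAB]
    exact hΩ.isPreconnected_inter _
  · exact hasContinuousLogOn_of_isSimplyConnected
      (Homeomorph.Set.univ ℂ).toHomotopyEquiv.simplyConnectedSpace isOpen_univ hh.continuousOn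
      fun t _ ↦ h0 t
  · obtain ⟨x, hx, hAx, rfl⟩ := hex t
    refine ⟨ratioSection A B e x ⁻¹' Ω, ?_, ?_⟩
    · exact (continuous_ratioSection e x).continuousAt.preimage_mem_nhds
        (ho.mem_nhds (by rwa [ratioSection_div hAx]))
    · exact (hasContinuousLogOn_of_ratioSection_mem hΩ ho hAB hAe hBe hAx).comp
        continuous_subtype_val.continuousOn fun y hy ↦ ⟨y.2.1, y.2.2, hy⟩

theorem not_hasContinuousLogOn_setOf_ne_zero (ho : IsOpen Ω) {x w : E} (hx : x ∈ Ω) (hAx : A x = 0)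
    (hAw : A w ≠ 0) : ¬ HasContinuousLogOn A {x ∈ Ω | A x ≠ 0} := by
  intro h
  have hline : Continuous fun ζ : ℂ ↦ x + ζ • w := by fun_prop
  obtain ⟨r, hr, hball⟩ := nhds_basis_closedBall.mem_iff.mp
    (hline.continuousAt.preimage_mem_nhds (x := 0) (ho.mem_nhds (by simpa using hx)))
  refine not_hasContinuousLogOn_id_sphere hr ?_
  convert (h.comp (t := sphere 0 r) hline.continuousOn fun ζ hζ ↦ ?_).const_mul (inv_ne_zero hAw)
    using 2 with ζ
  · simp [hAx, mul_comm ζ, hAw]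
  · have hζ0 : ζ ≠ 0 := ne_of_mem_sphere hζ hr.ne'
    exact ⟨hball (sphere_subset_closedBall hζ), by simp [hAx, hζ0, hAw]⟩

/- If every combination vanished somewhere, `B / A` would map `{A ≠ 0}` onto `ℂ` with connected
fibres along which `A` has a logarithm; these logarithms glue to one on `{A ≠ 0}`, which is absurd
near a zero of `A`. -/
theorem exists_forall_add_mul_ne_zero (hΩ : HasSimplyConnectedSlices Ω) (ho : IsOpen Ω)
    (hAB : ∀ x ∈ Ω, A x = 0 → B x ≠ 0) : ∃ a b : ℂ, ∀ x ∈ Ω, a * A x + b * B x ≠ 0 := by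
  by_contra! hzero
  obtain ⟨x, hx, hAx⟩ := hzero 1 0
  obtain ⟨w, hw, hBw⟩ := hzero 0 1
  simp only [one_mul, zero_mul, add_zero, zero_add] at hAx hBw
  refine not_hasContinuousLogOn_setOf_ne_zero ho hx hAx (fun hAw ↦ hAB w hw hAw hBw)
    (hasContinuousLogOn_setOf_ne_zero (e := (B x)⁻¹ • x) hΩ ho hAB (by simp [hAx])
      (by simp [hAB x hx hAx]) fun t ↦ ?_)
  obtain ⟨y, hy, h⟩ := hzero (-t) 1
  exact ⟨y, hy, by linear_combination h⟩

end Ratio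

theorem exists_forall_inter_ne_zero (hΩ : HasSimplyConnectedSlices Ω) (ho : IsOpen Ω)
    (s : Finset (E →L[ℂ] ℂ)) (V : Submodule ℂ E) (hs : ∀ x ∈ Ω ∩ V, ∃ A ∈ s, A x ≠ 0) :
    ∃ B : E →L[ℂ] ℂ, ∀ x ∈ Ω ∩ V, B x ≠ 0 := by
  classical
  induction s using Finset.induction_on generalizing V with
  | empty => exact ⟨0, fun x hx ↦ by simpa using hs x hx⟩
  | insert A s _ ih =>
    obtain ⟨B, hB⟩ := ih (V ⊓ A.ker) fun x hx ↦ by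
      obtain ⟨C, hC, hCx⟩ := hs x ⟨hx.1, hx.2.1⟩
      rcases Finset.mem_insert.mp hC with rfl | hCs
      · exact absurd hx.2.2 hCx
      · exact ⟨C, hCs, hCx⟩
    obtain ⟨a, b, hab⟩ := exists_forall_add_mul_ne_zero
      (hΩ.preimage_affineMap V.subtype.toAffineMap) (ho.preimage V.subtypeL.continuous)
      (A := A.comp V.subtypeL) (B := B.comp V.subtypeL) fun x hx hAx ↦ hB x ⟨hx, x.2, hAx⟩
    exact ⟨a • A + b • B, fun x hx ↦ hab ⟨x, hx.2⟩ hx.1⟩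

theorem exists_forall_map_sub_ne_zero [FiniteDimensional ℂ E] (hΩ : HasSimplyConnectedSlices Ω)
    (ho : IsOpen Ω) {ξ : E} (hξ : ξ ∉ Ω) : ∃ A : E →L[ℂ] ℂ, ∀ x ∈ Ω, A (x - ξ) ≠ 0 := by
  classical
  let b := Module.finBasis ℂ E
  let coords : Finset (E →L[ℂ] ℂ) :=
    Finset.univ.image fun i ↦ LinearMap.toContinuousLinearMap (b.coord i)
  obtain ⟨A, hA⟩ := exists_forall_inter_ne_zero
    (hΩ.preimage_affineMap (AffineEquiv.constVAdd ℂ E ξ).toAffineMap)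
    (ho.preimage (f := (ξ + ·)) (by fun_prop)) coords ⊤ fun x hx ↦ by
      have hx0 : x ≠ 0 := fun h ↦ hξ (by simpa [h] using hx)
      contrapose! hx0
      exact b.ext_elem fun i ↦ by
        simpa using hx0 _ (Finset.mem_image_of_mem _ (Finset.mem_univ i))
  exact ⟨A, fun x hx ↦ hA _ ⟨by simpa using hx, trivial⟩⟩

end Slices

section Energy

lemma add_pow_sub_sub_pow_mem {R : Type*} [CommRing R] (S : Subsemiring R) {x y : R}
    (hx : x ∈ S) (hy : y ∈ S) (n : ℕ) :
    (x + y) ^ n - (x - y) ^ n ∈ S ∧ (x + y) ^ n + (x - y) ^ n ∈ S := by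
  induction n with
  | zero => simpa using S.add_mem S.one_mem S.one_mem
  | succ n ih =>
    refine ⟨?_, ?_⟩
    · convert S.add_mem (S.mul_mem hx ih.1) (S.mul_mem hy ih.2) using 1
      ring
    · convert S.add_mem (S.mul_mem hx ih.2) (S.mul_mem hy ih.1) using 1
      ring

lemma hasSum_integral_pow_div_log {Z : Type*} [TopologicalSpace Z] [CompactSpace Z]
    [MeasurableSpace Z] [OpensMeasurableSpace Z] (μ : Measure Z) [IsFiniteMeasure μ]
    {K : C(Z, ℝ)} (hK : ‖K‖ < 1) :
    HasSum (fun n : ℕ ↦ ∫ x, (K ^ (n + 1)) x / (n + 1) ∂μ) (∫ x, -Real.log (1 - K x) ∂μ) := by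
  have abs_lt (x : Z) : |K x| < 1 := (K.norm_coe_le_norm x).trans_lt hK
  refine hasSum_integral_of_dominated_convergence (fun n _ ↦ ‖K‖ ^ (n + 1))
    (fun n ↦ (by fun_prop : Continuous _).aestronglyMeasurable)
    (fun n ↦ .of_forall fun x ↦ ?_)
    (.of_forall fun _ ↦
      (summable_nat_add_iff 1).2 (summable_geometric_of_lt_one (norm_nonneg _) hK))
    (integrable_const _)
    (.of_forall fun x ↦ by simpa using Real.hasSum_pow_div_log_of_abs_lt_one (abs_lt x))
  calc ‖(K ^ (n + 1)) x / (n + 1)‖ ≤ ‖(K ^ (n + 1)) x‖ := by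
        rw [norm_div]
        refine div_le_self (norm_nonneg _) ?_
        rw [Real.norm_of_nonneg (by positivity)]
        exact le_add_of_nonneg_left n.cast_nonneg
    _ ≤ ‖K‖ ^ (n + 1) := by
        rw [ContinuousMap.pow_apply, norm_pow]
        exact pow_le_pow_left₀ (norm_nonneg _) (K.norm_coe_le_norm x) _

variable {T : Type*} [TopologicalSpace T]

/-- The rank-one kernel `(s, t) ↦ φ s * φ t`, as a multiplicative function of `φ`. -/
def tensorSquare : C(T, ℝ) →* C(T × T, ℝ) where
  toFun φ := φ.comp .fst * φ.comp .snd
  map_one' := by ext; simp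
  map_mul' φ ψ := by ext; simp [mul_mul_mul_comm]

variable (T) in
/-- The finite sums of kernels `(s, t) ↦ φ s * φ t`, a multiplicatively closed class of positive
definite kernels. -/
def positiveKernels : Subsemiring C(T × T, ℝ) :=
  (MonoidHom.mrange (tensorSquare (T := T))).subsemiringClosure

lemma tensorSquare_mem_positiveKernels (φ : C(T, ℝ)) : tensorSquare φ ∈ positiveKernels T :=
  AddSubmonoid.subset_closure ⟨φ, rfl⟩

lemma smul_mem_positiveKernels {c : ℝ} (hc : 0 ≤ c) {K : C(T × T, ℝ)}
    (hK : K ∈ positiveKernels T) : c • K ∈ positiveKernels T := by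
  convert mul_mem (tensorSquare_mem_positiveKernels (.const T √c)) hK using 1
  ext x
  simp [tensorSquare, Real.mul_self_sqrt hc]

variable [CompactSpace T] [SecondCountableTopology T] [MeasurableSpace T] [BorelSpace T]
  (μ : Measure T) [IsFiniteMeasure μ]

lemma integrable_of_continuous {f : T × T → ℝ} (hf : Continuous f) : Integrable f (μ.prod μ) :=
  hf.integrable_of_hasCompactSupport (.of_compactSpace f)

lemma integral_nonneg_of_mem_positiveKernels {K : C(T × T, ℝ)} (hK : K ∈ positiveKernels T) :
    0 ≤ ∫ x, K x ∂μ.prod μ := by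
  induction hK using AddSubmonoid.closure_induction with
  | mem K hK =>
    obtain ⟨φ, rfl⟩ := hK
    exact (mul_self_nonneg (∫ t, φ t ∂μ)).trans_eq (integral_prod_mul _ _).symm
  | zero => simp
  | add K L _ _ ihK ihL =>
    simp only [ContinuousMap.add_apply]
    rw [integral_add (integrable_of_continuous μ K.continuous)
      (integrable_of_continuous μ L.continuous)]
    exact add_nonneg ihK ihL

lemma integral_log_one_sub_add_le {X Y : C(T × T, ℝ)} (hX : X ∈ positiveKernels T)
    (hY : Y ∈ positiveKernels T) (hadd : ‖X + Y‖ < 1) (hsub : ‖X - Y‖ < 1) :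
    ∫ x, Real.log (1 - (X + Y) x) ∂μ.prod μ ≤ ∫ x, Real.log (1 - (X - Y) x) ∂μ.prod μ := by
  have key := hasSum_le (fun n ↦ ?_) (hasSum_integral_pow_div_log (μ.prod μ) hsub)
    (hasSum_integral_pow_div_log (μ.prod μ) hadd)
  · simpa only [integral_neg, neg_le_neg_iff] using key
  · have hpos := integral_nonneg_of_mem_positiveKernels μ
      (add_pow_sub_sub_pow_mem _ hX hY (n + 1)).1
    simp only [ContinuousMap.sub_apply] at hpos
    rw [integral_sub (integrable_of_continuous μ (ContinuousMap.continuous _))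
      (integrable_of_continuous μ (ContinuousMap.continuous _))] at hpos
    rw [integral_div, integral_div]
    exact div_le_div_of_nonneg_right (sub_nonneg.1 hpos) (by positivity)

/-- The squared chordal distance on the Riemann sphere, normalised to take values in `[0, 1]`. -/
noncomputable def chordalDistSq (z w : ℂ) : ℝ := ‖z - w‖ ^ 2 / ((1 + ‖z‖ ^ 2) * (1 + ‖w‖ ^ 2))

lemma chordalDistSq_nonneg (z w : ℂ) : 0 ≤ chordalDistSq z w := by
  unfold chordalDistSq; positivity

lemma chordalDistSq_le_one (z w : ℂ) : chordalDistSq z w ≤ 1 := by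
  have hzw : ‖z - w‖ ^ 2 ≤ (‖z‖ + ‖w‖) ^ 2 := by gcongr; exact norm_sub_le z w
  refine div_le_one_of_le₀ ?_ (by positivity)
  nlinarith [sq_nonneg (1 - ‖z‖ * ‖w‖)]

lemma chordalDistSq_div_chordalDistSq_neg (z w : ℂ) :
    chordalDistSq z w / chordalDistSq z (-w) = ‖(z - w) / (z + w)‖ ^ 2 := by
  rw [chordalDistSq, chordalDistSq, norm_neg, sub_neg_eq_add,
    div_div_div_cancel_right₀ (by positivity), norm_div, div_pow]

lemma continuous_chordalDistSq : Continuous fun x : ℂ × ℂ ↦ chordalDistSq x.1 x.2 :=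
  Continuous.div (by fun_prop) (by fun_prop) fun x ↦ by positivity

/-- The last coordinate of the inverse stereographic projection of `z`. -/
noncomputable def stereoHeight (z : ℂ) : ℝ := (1 - ‖z‖ ^ 2) / (1 + ‖z‖ ^ 2)

/-- The horizontal part of the inverse stereographic projection of `z`. -/
noncomputable def stereoPlane (z : ℂ) : ℂ := (2 / (1 + ‖z‖ ^ 2) : ℝ) * z

lemma stereoPlane_neg (z : ℂ) : stereoPlane (-z) = -stereoPlane z := by simp [stereoPlane]

lemma continuous_stereoHeight : Continuous stereoHeight :=
  Continuous.div (by fun_prop) (by fun_prop) fun z ↦ by positivity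

lemma continuous_stereoPlane : Continuous stereoPlane :=
  .mul (Complex.continuous_ofReal.comp (.div (by fun_prop) (by fun_prop) fun z ↦ by positivity))
    continuous_id

lemma chordalDistSq_eq (z w : ℂ) : chordalDistSq z w = (1 - (stereoHeight z * stereoHeight w +
    ((stereoPlane z).re * (stereoPlane w).re + (stereoPlane z).im * (stereoPlane w).im))) / 2 := by
  have norm_sq (z : ℂ) : ‖z‖ ^ 2 = z.re ^ 2 + z.im ^ 2 := by
    rw [Complex.sq_norm, Complex.normSq_apply]; ring
  simp only [chordalDistSq, stereoHeight, stereoPlane, Complex.re_ofReal_mul,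
    Complex.im_ofReal_mul]
  field_simp
  simp only [norm_sq, Complex.sub_re, Complex.sub_im]
  ring

lemma norm_lt_one_of_eq_mul_one_sub_two_mul {Z : Type*} [TopologicalSpace Z] [CompactSpace Z]
    {K : C(Z, ℝ)} {c : Z → ℝ} {η : ℝ} (hη : 0 < η) (h0 : ∀ x, 0 ≤ c x) (h1 : ∀ x, c x ≤ 1)
    (hK : ∀ x, K x = (1 + 2 * η)⁻¹ * (1 - 2 * c x)) : ‖K‖ < 1 := by
  refine lt_of_le_of_lt ((ContinuousMap.norm_le K (by positivity)).2 fun x ↦ ?_)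
    (inv_lt_one_of_one_lt₀ (by linarith : 1 < 1 + 2 * η))
  rw [hK, norm_mul, Real.norm_of_nonneg (by positivity : 0 ≤ (1 + 2 * η)⁻¹)]
  refine mul_le_of_le_one_right (by positivity) (abs_le.2 ⟨?_, ?_⟩) <;> linarith [h0 x, h1 x]

lemma log_add_eq_log_add_log_one_sub {c η : ℝ} (hη : 0 < η) (hc : 0 ≤ c) :
    Real.log (c + η) =
      Real.log (1 / 2 + η) + Real.log (1 - (1 + 2 * η)⁻¹ * (1 - 2 * c)) := by
  have hsub : 1 - (1 + 2 * η)⁻¹ * (1 - 2 * c) = 2 * (c + η) / (1 + 2 * η) := by field_simp; ring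
  rw [← Real.log_mul (by positivity) (by rw [hsub]; positivity), hsub]
  congr 1
  field_simp

lemma integrable_log_one_sub {K : C(T × T, ℝ)} (hK : ‖K‖ < 1) :
    Integrable (fun x ↦ Real.log (1 - K x)) (μ.prod μ) :=
  integrable_of_continuous μ <| .log (by fun_prop) fun x ↦ (sub_pos.2 <|
    (le_abs_self _).trans_lt ((K.norm_coe_le_norm x).trans_lt hK)).ne'

theorem integral_log_chordalDistSq_le_integral_log_chordalDistSq_neg (G : C(T, ℂ)) {η : ℝ}
    (hη : 0 < η) :
    ∫ x, Real.log (chordalDistSq (G x.1) (G x.2) + η) ∂μ.prod μ ≤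
      ∫ x, Real.log (chordalDistSq (G x.1) (-G x.2) + η) ∂μ.prod μ := by
  let P : C(T, ℂ) := (ContinuousMap.mk _ continuous_stereoPlane).comp G
  let X : C(T × T, ℝ) := (1 + 2 * η)⁻¹ •
    tensorSquare ((ContinuousMap.mk _ continuous_stereoHeight).comp G)
  let Y : C(T × T, ℝ) := (1 + 2 * η)⁻¹ •
    (tensorSquare ((ContinuousMap.mk _ Complex.continuous_re).comp P) +
      tensorSquare ((ContinuousMap.mk _ Complex.continuous_im).comp P))
  have hX : X ∈ positiveKernels T :=
    smul_mem_positiveKernels (by positivity) (tensorSquare_mem_positiveKernels _)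
  have hY : Y ∈ positiveKernels T := smul_mem_positiveKernels (by positivity)
    (add_mem (tensorSquare_mem_positiveKernels _) (tensorSquare_mem_positiveKernels _))
  have add_eq (x : T × T) :
      (X + Y) x = (1 + 2 * η)⁻¹ * (1 - 2 * chordalDistSq (G x.1) (G x.2)) := by
    simp only [X, Y, P, tensorSquare, chordalDistSq_eq, MonoidHom.coe_mk, OneHom.coe_mk,
      ContinuousMap.comp_assoc, smul_add, ContinuousMap.add_apply, ContinuousMap.coe_smul,
      ContinuousMap.coe_mul, ContinuousMap.coe_comp, ContinuousMap.coe_mk, ContinuousMap.fst_apply,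
      ContinuousMap.snd_apply, Pi.smul_apply, Pi.mul_apply, Function.comp_apply, smul_eq_mul]
    ring
  have sub_eq (x : T × T) :
      (X - Y) x = (1 + 2 * η)⁻¹ * (1 - 2 * chordalDistSq (G x.1) (-G x.2)) := by
    simp only [X, Y, P, tensorSquare, chordalDistSq_eq, MonoidHom.coe_mk, OneHom.coe_mk,
      ContinuousMap.comp_assoc, smul_add, ContinuousMap.add_apply, ContinuousMap.sub_apply,
      ContinuousMap.coe_smul, ContinuousMap.coe_mul, ContinuousMap.coe_comp, ContinuousMap.coe_mk,
      ContinuousMap.fst_apply, ContinuousMap.snd_apply, Pi.smul_apply, Pi.mul_apply,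
      Function.comp_apply, smul_eq_mul, stereoHeight, norm_neg, stereoPlane_neg, Complex.neg_re,
      Complex.neg_im, mul_neg]
    ring
  have norm_add_lt : ‖X + Y‖ < 1 := norm_lt_one_of_eq_mul_one_sub_two_mul hη
    (fun _ ↦ chordalDistSq_nonneg _ _) (fun _ ↦ chordalDistSq_le_one _ _) add_eq
  have norm_sub_lt : ‖X - Y‖ < 1 := norm_lt_one_of_eq_mul_one_sub_two_mul hη
    (fun _ ↦ chordalDistSq_nonneg _ _) (fun _ ↦ chordalDistSq_le_one _ _) sub_eq
  simp only [log_add_eq_log_add_log_one_sub hη (chordalDistSq_nonneg _ _), ← add_eq, ← sub_eq]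
  rw [integral_add (integrable_const _) (integrable_log_one_sub μ norm_add_lt),
    integral_add (integrable_const _) (integrable_log_one_sub μ norm_sub_lt)]
  exact add_le_add_right (integral_log_one_sub_add_le μ hX hY norm_add_lt norm_sub_lt) _

end Energy

section Jensen

variable {h : ℂ → ℂ} {c : ℂ} {R : ℝ}

lemma analyticOnNhd_dslope {s : Set ℂ} (hh : AnalyticOnNhd ℂ h s) (hc : c ∈ s) :
    AnalyticOnNhd ℂ (dslope h c) s := by
  let U : Set ℂ := {z | AnalyticAt ℂ h z}
  have hU : IsOpen U := isOpen_analyticAt ℂ h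
  have hd : DifferentiableOn ℂ h U := fun z hz ↦ hz.differentiableAt.differentiableWithinAt
  exact (((Complex.differentiableOn_dslope (hU.mem_nhds (hh c hc))).2 hd).analyticOnNhd hU).mono hh

lemma log_norm_le_circleAverage_log_norm (hR : 0 < R) (hh : AnalyticOnNhd ℂ h (closedBall c R))
    (hc : h c ≠ 0) : Real.log ‖h c‖ ≤ Real.circleAverage (fun z ↦ Real.log ‖h z‖) c R := by
  rw [← abs_of_pos hR] at hh
  rw [AnalyticOnNhd.circleAverage_log_norm hR.ne' hh hc]
  refine le_add_of_nonneg_left (finsum_nonneg fun u ↦ ?_)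
  by_cases hu : u ∈ closedBall c |R|
  · refine mul_nonneg (mod_cast MeromorphicOn.AnalyticOnNhd.divisor_nonneg hh u) ?_
    obtain rfl | huc := eq_or_ne c u
    · simp
    · have hpos : 0 < ‖c - u‖ := norm_pos_iff.2 (sub_ne_zero.2 huc)
      rw [← div_eq_mul_inv]
      refine Real.log_nonneg ((one_le_div hpos).2 ?_)
      rwa [mem_closedBall, dist_comm, dist_eq_norm, abs_of_pos hR] at hu
  · simp [Function.locallyFinsuppWithin.apply_eq_zero_of_notMem _ hu]

lemma two_mul_log_norm_le_circleAverage (hR : 0 < R)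
    (hh : AnalyticOnNhd ℂ h (closedBall c R)) (hc : h c ≠ 0) {η : ℝ} (hη : 0 < η) :
    2 * Real.log ‖h c‖ ≤ Real.circleAverage (fun z ↦ Real.log (‖h z‖ ^ 2 + η)) c R := by
  classical
  have hsub : sphere c |R| ⊆ closedBall c R := (abs_of_pos hR).symm ▸ sphere_subset_closedBall
  -- `log ‖h z‖` takes the junk value `0` at the zeros of `h`, so it is modified there.
  let f : ℂ → ℝ := fun z ↦ if h z = 0 then Real.log η else 2 • Real.log ‖h z‖
  have hf : (fun z ↦ (2 : ℝ) • Real.log ‖h z‖) =ᶠ[codiscreteWithin (sphere c |R|)] f := by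
    have hne := hh.preimage_zero_mem_codiscreteWithin hc (mem_closedBall_self hR.le)
      ((convex_closedBall c R).isConnected (nonempty_closedBall.2 hR.le))
    filter_upwards [codiscreteWithin_mono hsub hne] with z (hz : h z ≠ 0)
    simp [f, hz]
  have hlog : CircleIntegrable (fun z ↦ (2 : ℝ) • Real.log ‖h z‖) c R :=
    (MeromorphicOn.circleIntegrable_log_norm
      fun z hz ↦ (hh z (hsub hz)).meromorphicAt).const_fun_smul
  have hreg : ContinuousOn (fun z ↦ Real.log (‖h z‖ ^ 2 + η)) (sphere c |R|) := by
    have : ContinuousOn h (sphere c |R|) := hh.continuousOn.mono hsub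
    exact .log (by fun_prop) fun z _ ↦ by positivity
  calc 2 * Real.log ‖h c‖ ≤ 2 * Real.circleAverage (fun z ↦ Real.log ‖h z‖) c R := by
        gcongr
        exact log_norm_le_circleAverage_log_norm hR hh hc
    _ = Real.circleAverage (fun z ↦ (2 : ℝ) • Real.log ‖h z‖) c R := by
        rw [Real.circleAverage_fun_smul, smul_eq_mul]
    _ = Real.circleAverage f c R := Real.circleAverage_congr_codiscreteWithin hf hR.ne'
    _ ≤ _ := Real.circleAverage_mono (hlog.congr_codiscreteWithin hf) hreg.circleIntegrable'
        fun z _ ↦ ?_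
  by_cases hz : h z = 0
  · simp [f, hz]
  · have : 0 < ‖h z‖ := norm_pos_iff.2 hz
    simp only [f, hz, if_false]
    rw [nsmul_eq_mul, ← Real.log_pow]
    exact Real.log_le_log (by positivity) (by linarith)

lemma two_mul_log_mul_norm_deriv_le_circleAverage (hR : 0 < R)
    (hh : AnalyticOnNhd ℂ h (closedBall c R)) (hc : h c = 0) (hd : deriv h c ≠ 0) {η : ℝ}
    (hη : 0 < η) :
    2 * Real.log (R * ‖deriv h c‖) ≤
      Real.circleAverage (fun z ↦ Real.log (‖h z‖ ^ 2 + η)) c R := by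
  let k : ℂ → ℂ := fun z ↦ R * dslope h c z
  have hk : AnalyticOnNhd ℂ k (closedBall c R) :=
    fun z hz ↦ analyticAt_const.mul (analyticOnNhd_dslope hh (mem_closedBall_self hR.le) z hz)
  have hkc : ‖k c‖ = R * ‖deriv h c‖ := by
    simp [k, abs_of_pos hR]
  have norm_eq {z : ℂ} (hz : z ∈ sphere c |R|) : ‖k z‖ = ‖h z‖ := by
    rw [abs_of_pos hR, mem_sphere, dist_eq_norm] at hz
    have hzc : z ≠ c := sub_ne_zero.1 (norm_pos_iff.1 (hz ▸ hR))
    simp only [k]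
    rw [dslope_of_ne _ hzc, slope_def_field, hc, sub_zero, norm_mul, norm_div, hz,
      Complex.norm_real, Real.norm_of_nonneg hR.le, mul_div_cancel₀ _ hR.ne']
  rw [← hkc, Real.circleAverage_congr_sphere
    (f₂ := fun z ↦ Real.log (‖k z‖ ^ 2 + η)) fun z hz ↦ by simp only [norm_eq hz]]
  refine two_mul_log_norm_le_circleAverage hR hk (norm_pos_iff.1 ?_) hη
  rw [hkc]
  positivity

end Jensen

section Gelfer

open AddCircle

lemma circleMap_zero_two_pi_mul (r x : ℝ) :
    circleMap 0 r (2 * Real.pi * x) = r * (toCircle (x : UnitAddCircle) : ℂ) := by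
  rw [circleMap_zero, toCircle_apply_mk, Circle.coe_exp, div_one]

lemma circleAverage_zero_eq_integral (f : ℂ → ℝ) (r : ℝ) :
    Real.circleAverage f 0 r = ∫ x : UnitAddCircle, f (r * (toCircle x : ℂ)) := by
  rw [← UnitAddCircle.intervalIntegral_preimage 0, Real.circleAverage_def]
  simp only [← circleMap_zero_two_pi_mul]
  rw [intervalIntegral.integral_comp_mul_left (fun θ ↦ f (circleMap 0 r θ)) Real.two_pi_pos.ne',
    mul_zero, zero_add, mul_one]

lemma integrable_log_norm_toCircle_sub_one :
    Integrable fun x : UnitAddCircle ↦ Real.log ‖(toCircle x : ℂ) - 1‖ := by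
  have hint : CircleIntegrable (fun z : ℂ ↦ Real.log ‖z - 1‖) 0 1 :=
    MeromorphicOn.circleIntegrable_log_norm fun z _ ↦ by fun_prop
  have hmeas : Measurable fun x : UnitAddCircle ↦ Real.log ‖(toCircle x : ℂ) - 1‖ :=
    Real.measurable_log.comp (by
      have := continuous_toCircle (T := 1)
      exact Continuous.measurable (by fun_prop))
  rw [← (UnitAddCircle.measurePreserving_mk 0).integrable_comp hmeas.aestronglyMeasurable,
    ← IntegrableOn, ← intervalIntegrable_iff_integrableOn_Ioc_of_le (by norm_num)]
  have hscale := IntervalIntegrable.comp_mul_left hint (c := 2 * Real.pi)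
  rw [zero_div, div_self Real.two_pi_pos.ne'] at hscale
  simpa [circleMap_zero_two_pi_mul, Function.comp_def] using hscale

lemma integral_log_norm_toCircle_sub_one :
    ∫ x : UnitAddCircle, Real.log ‖(toCircle x : ℂ) - 1‖ = 0 := by
  simpa using (circleAverage_zero_eq_integral (fun z ↦ Real.log ‖z - 1‖) 1).symm.trans
    (circleAverage_log_norm_sub_const₁ norm_one)

lemma ae_toCircle_ne_one : ∀ᵐ x : UnitAddCircle, (toCircle x : ℂ) ≠ 1 := by
  have h0 : volume ({0} : Set UnitAddCircle) = 0 := by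
    simpa using volume_closedBall (T := 1) (x := 0) 0
  filter_upwards [compl_mem_ae_iff.2 h0] with x hx hx1
  refine hx (injective_toCircle one_ne_zero ?_)
  rwa [toCircle_zero, ← Circle.coe_eq_one]

lemma integral_prod_eq_integral_integral_add {A : Type*} [AddGroup A] [TopologicalSpace A]
    [IsTopologicalAddGroup A] [CompactSpace A] [SecondCountableTopology A] [MeasurableSpace A]
    [BorelSpace A] (μ : Measure A) [IsFiniteMeasure μ] [μ.IsAddRightInvariant] {F : A × A → ℝ}
    (hF : Continuous F) : ∫ x, F x ∂μ.prod μ = ∫ a, ∫ t, F (a + t, t) ∂μ ∂μ := by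
  have hshift := measurePreserving_add_prod μ μ
  rw [← hshift.map_eq, integral_map hshift.aemeasurable hF.aestronglyMeasurable]
  exact integral_prod _ (integrable_of_continuous μ (by fun_prop))

lemma log_div_add_le {x y c η : ℝ} (hx : 0 ≤ x) (hc : 0 < c) (hcy : c ≤ y) (hy : y ≤ 1)
    (hη : 0 < η) :
    Real.log (x / y + η) ≤ Real.log (x + η) - Real.log (y + η) + η / c := by
  have hy0 : 0 < y := hc.trans_le hcy
  have hnum : Real.log (x / y + η) ≤ Real.log (x + η) - Real.log y := by
    rw [← Real.log_div (by positivity) hy0.ne', add_div]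
    exact Real.log_le_log (by positivity)
      (add_le_add_right (le_div_self hη.le hy0 hy) _)
  have hden : Real.log (y + η) - Real.log y ≤ η / c := by
    rw [← Real.log_div (by positivity) hy0.ne', add_div, div_self hy0.ne']
    calc Real.log (1 + η / y) ≤ η / y := by
          linarith [Real.log_le_sub_one_of_pos (by positivity : 0 < 1 + η / y)]
      _ ≤ η / c := by gcongr
  linarith

lemma exists_pos_forall_le_chordalDistSq_neg {T : Type*} [TopologicalSpace T] [CompactSpace T]
    (G : C(T, ℂ)) (hG : ∀ s t, G s + G t ≠ 0) :
    ∃ c > 0, ∀ s t, c ≤ chordalDistSq (G s) (-G t) := by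
  cases isEmpty_or_nonempty T
  · exact ⟨1, one_pos, fun s ↦ isEmptyElim s⟩
  have hcont : Continuous fun x : T × T ↦ chordalDistSq (G x.1) (-G x.2) :=
    continuous_chordalDistSq.comp (by fun_prop : Continuous fun x : T × T ↦ (G x.1, -G x.2))
  obtain ⟨x, -, hx⟩ := isCompact_univ.exists_isMinOn univ_nonempty hcont.continuousOn
  refine ⟨_, ?_, fun s t ↦ hx (mem_univ (s, t))⟩
  have : 0 < ‖G x.1 - -G x.2‖ := by simpa using hG x.1 x.2
  unfold chordalDistSq
  positivity

lemma continuous_log_norm_sub_div_add {T : Type*} [TopologicalSpace T] (G : C(T, ℂ))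
    (hG : ∀ s t, G s + G t ≠ 0) {η : ℝ} (hη : 0 < η) :
    Continuous fun x : T × T ↦
      Real.log (‖(G x.1 - G x.2) / (G x.1 + G x.2)‖ ^ 2 + η) := by
  have hdiv : Continuous fun x : T × T ↦ (G x.1 - G x.2) / (G x.1 + G x.2) :=
    .div (by fun_prop) (by fun_prop) fun x ↦ hG x.1 x.2
  exact .log (by fun_prop) fun x ↦ by positivity

lemma exists_forall_integral_log_norm_sub_div_add_le {T : Type*} [TopologicalSpace T]
    [CompactSpace T] [SecondCountableTopology T] [MeasurableSpace T] [BorelSpace T]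
    (μ : Measure T) [IsProbabilityMeasure μ] (G : C(T, ℂ)) (hG : ∀ s t, G s + G t ≠ 0) :
    ∃ c > 0, ∀ η > 0,
      ∫ x, Real.log (‖(G x.1 - G x.2) / (G x.1 + G x.2)‖ ^ 2 + η) ∂μ.prod μ ≤ η / c := by
  obtain ⟨c, hc, hle⟩ := exists_pos_forall_le_chordalDistSq_neg G hG
  refine ⟨c, hc, fun η hη ↦ ?_⟩
  have hint {f : T × T → ℂ × ℂ} (hf : Continuous f) :
      Integrable (fun x ↦ Real.log (chordalDistSq (f x).1 (f x).2 + η)) (μ.prod μ) :=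
    integrable_of_continuous μ <| .log ((continuous_chordalDistSq.comp hf).add_const η)
      fun x ↦ (add_pos_of_nonneg_of_pos (chordalDistSq_nonneg _ _) hη).ne'
  have hsub : Integrable (fun x ↦ Real.log (chordalDistSq (G x.1) (G x.2) + η)) (μ.prod μ) :=
    hint (f := fun x ↦ (G x.1, G x.2)) (by fun_prop)
  have hadd : Integrable (fun x ↦ Real.log (chordalDistSq (G x.1) (-G x.2) + η)) (μ.prod μ) :=
    hint (f := fun x ↦ (G x.1, -G x.2)) (by fun_prop)
  calc ∫ x, Real.log (‖(G x.1 - G x.2) / (G x.1 + G x.2)‖ ^ 2 + η) ∂μ.prod μ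
      ≤ ∫ x, Real.log (chordalDistSq (G x.1) (G x.2) + η) -
          Real.log (chordalDistSq (G x.1) (-G x.2) + η) + η / c ∂μ.prod μ := by
        refine integral_mono (integrable_of_continuous μ (continuous_log_norm_sub_div_add G hG hη))
          ((hsub.sub hadd).add (integrable_const _)) fun x ↦ ?_
        simp only [← chordalDistSq_div_chordalDistSq_neg]
        exact log_div_add_le (chordalDistSq_nonneg _ _) hc (hle _ _) (chordalDistSq_le_one _ _) hη
    _ ≤ η / c := by
        rw [integral_add (f := fun x ↦ _ - _) (hsub.sub hadd) (integrable_const _),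
          integral_sub hsub hadd,
          integral_const, probReal_univ, one_smul]
        linarith [integral_log_chordalDistSq_le_integral_log_chordalDistSq_neg μ G hη]

variable {g : ℂ → ℂ}

lemma hasDerivAt_sub_div_add_comp_mul {g' u : ℂ} (hg : HasDerivAt g g' 0) (hg0 : g 0 ≠ 0) :
    HasDerivAt (fun z ↦ (g (u * z) - g z) / (g (u * z) + g z)) ((u - 1) * (g' / (2 * g 0))) 0 := by
  have hgu : HasDerivAt (fun z ↦ g (u * z)) (g' * u) 0 :=
    HasDerivAt.comp (h₂ := g) 0 (by simpa using hg)
      (by simpa using (hasDerivAt_id (0 : ℂ)).const_mul u)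
  have hadd : g (u * 0) + g 0 ≠ 0 := by simpa [← two_mul] using hg0
  refine ((hgu.sub hg).div (hgu.add hg) hadd).congr_deriv ?_
  simp only [Pi.sub_apply, Pi.add_apply, mul_zero, sub_self, zero_mul, sub_zero, ← two_mul]
  field_simp

lemma ne_zero_of_add_ne_zero
    (hne : ∀ z ∈ ball (0 : ℂ) 1, ∀ w ∈ ball (0 : ℂ) 1, g z + g w ≠ 0)
    {z : ℂ} (hz : z ∈ ball (0 : ℂ) 1) : g z ≠ 0 := fun h ↦ hne z hz z hz (by rw [h, add_zero])

lemma two_mul_log_le_circleAverage_sub_div_add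
    (hg : DifferentiableOn ℂ g (ball 0 1))
    (hne : ∀ z ∈ ball (0 : ℂ) 1, ∀ w ∈ ball (0 : ℂ) 1, g z + g w ≠ 0)
    (hd : deriv g 0 ≠ 0) {r : ℝ} (hr : r ∈ Ioo 0 1)
    {u : ℂ} (hu : ‖u‖ = 1) (hu1 : u ≠ 1) {η : ℝ} (hη : 0 < η) :
    2 * (Real.log (r * (‖deriv g 0‖ / (2 * ‖g 0‖))) + Real.log ‖u - 1‖) ≤
      Real.circleAverage
        (fun z ↦ Real.log (‖(g (u * z) - g z) / (g (u * z) + g z)‖ ^ 2 + η)) 0 r := by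
  have h0 : (0 : ℂ) ∈ ball (0 : ℂ) 1 := mem_ball_self one_pos
  have maps : MapsTo (u * ·) (ball (0 : ℂ) 1) (ball 0 1) := fun z hz ↦ by
    rw [mem_ball_zero_iff] at hz ⊢
    rwa [norm_mul, hu, one_mul]
  have hgu : DifferentiableOn ℂ (fun z ↦ g (u * z)) (ball 0 1) := hg.comp (by fun_prop) maps
  let q : ℂ → ℂ := fun z ↦ (g (u * z) - g z) / (g (u * z) + g z)
  have hq : DifferentiableOn ℂ q (ball 0 1) :=
    (hgu.sub hg).div (hgu.add hg) fun z hz ↦ hne _ (maps hz) _ hz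
  have hg0 : g 0 ≠ 0 := ne_zero_of_add_ne_zero hne h0
  have hq' : deriv q 0 = (u - 1) * (deriv g 0 / (2 * g 0)) :=
    (hasDerivAt_sub_div_add_comp_mul
      (hg.differentiableAt (isOpen_ball.mem_nhds h0)).hasDerivAt hg0).deriv
  have norm_q' : r * ‖deriv q 0‖ = r * (‖deriv g 0‖ / (2 * ‖g 0‖)) * ‖u - 1‖ := by
    rw [hq', norm_mul, norm_div, norm_mul, Complex.norm_two]
    ring
  have hu1 : u - 1 ≠ 0 := sub_ne_zero.2 hu1
  have hr0 : r ≠ 0 := hr.1.ne'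
  have hu0 : ‖u - 1‖ ≠ 0 := norm_ne_zero_iff.2 hu1
  rw [← Real.log_mul (by positivity) hu0, ← norm_q']
  exact two_mul_log_mul_norm_deriv_le_circleAverage hr.1
    ((hq.analyticOnNhd isOpen_ball).mono (closedBall_subset_ball hr.2)) (by simp [q])
    (by simp [hq', hu1, hd, hg0]) hη

lemma two_mul_log_le_integral_integral_sub_div_add
    (hg : DifferentiableOn ℂ g (ball 0 1))
    (hne : ∀ z ∈ ball (0 : ℂ) 1, ∀ w ∈ ball (0 : ℂ) 1, g z + g w ≠ 0)
    (hd : deriv g 0 ≠ 0) {r : ℝ} (hr : r ∈ Ioo 0 1) {G : C(UnitAddCircle, ℂ)}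
    (hG : ∀ x, G x = g (r * (toCircle x : ℂ))) (hGne : ∀ s t, G s + G t ≠ 0) {η : ℝ} (hη : 0 < η) :
    2 * Real.log (r * (‖deriv g 0‖ / (2 * ‖g 0‖))) ≤ ∫ a : UnitAddCircle, ∫ t : UnitAddCircle,
      Real.log (‖(G (a + t) - G t) / (G (a + t) + G t)‖ ^ 2 + η) := by
  have : IsProbabilityMeasure (volume : Measure UnitAddCircle) := ⟨UnitAddCircle.measure_univ⟩
  have hint : Integrable fun a : UnitAddCircle ↦
      Real.log (r * (‖deriv g 0‖ / (2 * ‖g 0‖))) + Real.log ‖(toCircle a : ℂ) - 1‖ :=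
    (integrable_const _).add integrable_log_norm_toCircle_sub_one
  have hint' : Integrable fun a : UnitAddCircle ↦ ∫ t : UnitAddCircle,
      Real.log (‖(G (a + t) - G t) / (G (a + t) + G t)‖ ^ 2 + η) :=
    (integrable_of_continuous volume ((continuous_log_norm_sub_div_add G hGne hη).comp
      (by fun_prop : Continuous fun x : UnitAddCircle × UnitAddCircle ↦
        (x.1 + x.2, x.2)))).integral_prod_left
  calc 2 * Real.log (r * (‖deriv g 0‖ / (2 * ‖g 0‖)))
      = ∫ a : UnitAddCircle, 2 * (Real.log (r * (‖deriv g 0‖ / (2 * ‖g 0‖))) +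
          Real.log ‖(toCircle a : ℂ) - 1‖) := by
        rw [integral_const_mul, integral_add (integrable_const _)
          integrable_log_norm_toCircle_sub_one, integral_log_norm_toCircle_sub_one,
          integral_const, probReal_univ, one_smul, add_zero]
    _ ≤ _ := integral_mono_ae (hint.const_mul 2) hint' ?_
  filter_upwards [ae_toCircle_ne_one] with a ha
  refine (two_mul_log_le_circleAverage_sub_div_add hg hne hd hr (Circle.norm_coe _) ha hη).trans_eq
    ((circleAverage_zero_eq_integral _ r).trans ?_)
  simp only [hG, toCircle_add, Circle.coe_mul, mul_left_comm]

lemma log_mul_norm_deriv_div_nonpos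
    (hg : DifferentiableOn ℂ g (ball 0 1))
    (hne : ∀ z ∈ ball (0 : ℂ) 1, ∀ w ∈ ball (0 : ℂ) 1, g z + g w ≠ 0)
    (hd : deriv g 0 ≠ 0) {r : ℝ} (hr : r ∈ Ioo 0 1) :
    Real.log (r * (‖deriv g 0‖ / (2 * ‖g 0‖))) ≤ 0 := by
  have : IsProbabilityMeasure (volume : Measure UnitAddCircle) := ⟨UnitAddCircle.measure_univ⟩
  have mem_ball (x : UnitAddCircle) : r * (toCircle x : ℂ) ∈ ball (0 : ℂ) 1 := by
    rw [mem_ball_zero_iff, norm_mul, Circle.norm_coe, mul_one, Complex.norm_real,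
      Real.norm_of_nonneg hr.1.le]
    exact hr.2
  let G : C(UnitAddCircle, ℂ) := ⟨fun x ↦ g (r * (toCircle x : ℂ)),
    hg.continuousOn.comp_continuous (by have := continuous_toCircle (T := 1); fun_prop) mem_ball⟩
  have hG (s t) : G s + G t ≠ 0 := hne _ (mem_ball s) _ (mem_ball t)
  obtain ⟨c, hc, hle⟩ := exists_forall_integral_log_norm_sub_div_add_le volume G hG
  have bound {η : ℝ} (hη : 0 < η) : 2 * Real.log (r * (‖deriv g 0‖ / (2 * ‖g 0‖))) ≤ η / c :=
    (two_mul_log_le_integral_integral_sub_div_add hg hne hd hr (fun _ ↦ rfl) hG hη).trans <|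
      (integral_prod_eq_integral_integral_add volume
        (continuous_log_norm_sub_div_add G hG hη)).symm.trans_le (hle η hη)
  refine le_of_forall_pos_le_add fun ε hε ↦ ?_
  have := bound (by positivity : 0 < 2 * ε * c)
  rw [mul_div_cancel_right₀ _ hc.ne'] at this
  linarith

theorem norm_deriv_le_two_mul_norm_of_add_ne_zero
    (hg : DifferentiableOn ℂ g (ball 0 1))
    (hne : ∀ z ∈ ball (0 : ℂ) 1, ∀ w ∈ ball (0 : ℂ) 1, g z + g w ≠ 0) :
    ‖deriv g 0‖ ≤ 2 * ‖g 0‖ := by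
  have h0 : (0 : ℂ) ∈ ball (0 : ℂ) 1 := mem_ball_self one_pos
  have hg0 : 0 < 2 * ‖g 0‖ := by
    have := ne_zero_of_add_ne_zero hne h0
    positivity
  obtain hd | hd := eq_or_ne (deriv g 0) 0
  · simp [hd]
  rw [← div_le_one hg0]
  have hlim : Tendsto (fun r : ℝ ↦ r * (‖deriv g 0‖ / (2 * ‖g 0‖))) (𝓝[<] 1)
      (𝓝 (1 * (‖deriv g 0‖ / (2 * ‖g 0‖)))) :=
    (continuous_id.mul continuous_const).continuousWithinAt
  rw [one_mul] at hlim
  refine le_of_tendsto hlim ?_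
  filter_upwards [Ioo_mem_nhdsLT one_pos] with r hr
  exact (Real.log_nonpos_iff (mul_nonneg hr.1.le (by positivity))).1
    (log_mul_norm_deriv_div_nonpos hg hne hd hr)

end Gelfer

section Functionals

variable {E : Type*} [NormedAddCommGroup E] [NormedSpace ℂ E] {Ω : Set E} {A : E →L[ℂ] ℂ} {ξ : E}

lemma hasDerivAt_of_eventually_exp_eq {l F : ℂ → ℂ} {F' z : ℂ} (hl : ContinuousAt l z)
    (hF : HasDerivAt F F' z) (hexp : ∀ᶠ w in 𝓝 z, Complex.exp (l w) = F w) :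
    HasDerivAt l (F' / F z) z := by
  have hz : Complex.exp (l z) = F z := hexp.self_of_nhds
  have hFz : F z ≠ 0 := hz ▸ Complex.exp_ne_zero _
  have hlog : HasDerivAt (fun w ↦ l z + Complex.log (F w / F z)) (F' / F z) z := by
    have := (hF.div_const (F z)).clog (by simp [div_self hFz])
    rw [div_self hFz, div_one] at this
    exact this.const_add _
  refine hlog.congr_of_eventuallyEq ?_
  have him : ∀ᶠ w in 𝓝 z, |(l w - l z).im| < Real.pi :=
    ContinuousAt.eventually_lt (by fun_prop) continuousAt_const (by simpa using Real.pi_pos)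
  filter_upwards [hexp, him] with w hw hπ
  rw [← hw, ← hz, ← Complex.exp_sub, Complex.log_exp (neg_lt_of_abs_lt hπ) (le_of_abs_le hπ.le),
    add_sub_cancel]

namespace HasSimplyConnectedSlices

lemma log_eq_of_map_sub_eq (hΩ : HasSimplyConnectedSlices Ω) {l : E → ℂ} (hl : ContinuousOn l Ω)
    (hexp : ∀ x ∈ Ω, Complex.exp (l x) = A (x - ξ)) {x y : E} (hx : x ∈ Ω) (hy : y ∈ Ω)
    (hxy : A (x - ξ) = A (y - ξ)) : l x = l y := by
  have hA : A (y - x) = 0 := by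
    rw [← sub_sub_sub_cancel_right y x ξ, map_sub, hxy, sub_self]
  have := sub_eq_sub_of_exp_sub_eq (hΩ x hx (y - x)).isPathConnected.isConnected.isPreconnected
    (f := fun c : ℂ ↦ l (x + c • (y - x))) (g := 0) (c := A (x - ξ))
    (hl.comp (by fun_prop) fun c hc ↦ hc) continuousOn_const
    (fun c hc ↦ by
      rw [Pi.zero_apply, sub_zero, hexp _ hc, add_sub_right_comm, map_add, map_smul, hA, smul_zero,
        add_zero])
    (x := 0) (y := 1) (by simpa using hx) (by simpa using hy)
  simpa using this

theorem norm_map_deriv_le (hΩ : HasSimplyConnectedSlices Ω) (ho : IsOpen Ω)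
    (hA : ∀ x ∈ Ω, A (x - ξ) ≠ 0) {f : ℂ → E} (hf : DifferentiableOn ℂ f (ball 0 1))
    (hm : MapsTo f (ball 0 1) Ω) :
    ‖A (deriv f 0)‖ ≤ 4 * ‖A (f 0 - ξ)‖ := by
  have h0 : (0 : ℂ) ∈ ball (0 : ℂ) 1 := mem_ball_self one_pos
  obtain ⟨l, hl, hexp⟩ := hΩ.hasContinuousLogOn ho
    (f := fun x ↦ A (x - ξ)) (by fun_prop) hA
  have hlf (z) (hz : z ∈ ball (0 : ℂ) 1) :
      HasDerivAt (fun z ↦ l (f z)) (A (deriv f z) / A (f z - ξ)) z := by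
    have hnhds := isOpen_ball.mem_nhds hz
    refine hasDerivAt_of_eventually_exp_eq (F := fun w ↦ A (f w - ξ))
      ((hl.comp hf.continuousOn hm).continuousAt hnhds) ?_ ?_
    · exact A.hasFDerivAt.comp_hasDerivAt z ((hf.differentiableAt hnhds).hasDerivAt.sub_const ξ)
    · filter_upwards [hnhds] with w hw using hexp _ (hm hw)
  have hsqrt (z) (hz : z ∈ ball (0 : ℂ) 1) := ((hlf z hz).div_const 2).cexp
  have hsq (z) (hz : z ∈ ball (0 : ℂ) 1) : Complex.exp (l (f z) / 2) ^ 2 = A (f z - ξ) := by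
    rw [← Complex.exp_nat_mul, Nat.cast_ofNat, mul_div_cancel₀ _ two_ne_zero]
    exact hexp _ (hm hz)
  have hne : ∀ z ∈ ball (0 : ℂ) 1, ∀ w ∈ ball (0 : ℂ) 1,
      Complex.exp (l (f z) / 2) + Complex.exp (l (f w) / 2) ≠ 0 := by
    intro z hz w hw hzw
    have hA' : A (f z - ξ) = A (f w - ξ) := by
      rw [← hsq z hz, ← hsq w hw, eq_neg_of_add_eq_zero_left hzw, neg_sq]
    rw [hΩ.log_eq_of_map_sub_eq hl hexp (hm hz) (hm hw) hA', ← two_mul] at hzw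
    exact mul_ne_zero two_ne_zero (Complex.exp_ne_zero _) hzw
  have key := norm_deriv_le_two_mul_norm_of_add_ne_zero
    (fun z hz ↦ (hsqrt z hz).differentiableAt.differentiableWithinAt) hne
  have hA0 : 0 < ‖A (f 0 - ξ)‖ := norm_pos_iff.2 (hA _ (hm h0))
  rw [(hsqrt 0 h0).deriv, norm_mul, mul_comm 2, mul_le_mul_iff_right₀ (by simp), norm_div,
    norm_div, Complex.norm_two, div_le_iff₀ two_pos, div_le_iff₀ hA0] at key
  linarith

end HasSimplyConnectedSlices

end Functionals

section Curves

lemma absolutelyContinuousOnInterval_comp_of_contDiffOn {φ u : ℝ → ℝ} {a b : ℝ}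
    (hu : AbsolutelyContinuousOnInterval u a b) (hφ : ContDiffOn ℝ 1 φ (u '' uIcc a b)) :
    AbsolutelyContinuousOnInterval (fun t ↦ φ (u t)) a b := by
  have hconv : Convex ℝ (u '' uIcc a b) :=
    (isPreconnected_uIcc.image u hu.continuousOn).ordConnected.convex
  obtain ⟨K, hK⟩ := hφ.exists_lipschitzOnWith one_ne_zero hconv
    (isCompact_uIcc.image_of_continuousOn hu.continuousOn)
  have hlim : Tendsto (fun I : ℕ × (ℕ → ℝ × ℝ) ↦
      K * ∑ i ∈ Finset.range I.1, dist (u (I.2 i).1) (u (I.2 i).2))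
      (AbsolutelyContinuousOnInterval.totalLengthFilter ⊓
        𝓟 (AbsolutelyContinuousOnInterval.disjWithin a b)) (𝓝 0) := by
    simpa using Tendsto.const_mul (K : ℝ) hu
  refine squeeze_zero' (Eventually.of_forall fun I ↦ Finset.sum_nonneg fun _ _ ↦ dist_nonneg) ?_
    hlim
  rw [eventually_inf_principal]
  filter_upwards with I hI
  rw [Finset.mul_sum]
  refine Finset.sum_le_sum fun i hi ↦ hK.dist_le_mul _ ?_ _ ?_
  · exact mem_image_of_mem u (hI.1 i hi).1
  · exact mem_image_of_mem u (hI.1 i hi).2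

lemma integral_deriv_div_eq_log_sub_log {u : ℝ → ℝ} {a b : ℝ}
    (hu : AbsolutelyContinuousOnInterval u a b) (h0 : ∀ t ∈ uIcc a b, u t ≠ 0) :
    ∫ t in a..b, deriv u t / u t = Real.log (u b) - Real.log (u a) := by
  have hlog : AbsolutelyContinuousOnInterval (fun t ↦ Real.log (u t)) a b :=
    absolutelyContinuousOnInterval_comp_of_contDiffOn hu <|
      Real.contDiffOn_log.mono (by rintro _ ⟨t, ht, rfl⟩; exact h0 t ht)
  rw [← hlog.integral_deriv_eq_sub]
  refine intervalIntegral.integral_congr_ae ?_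
  filter_upwards [hu.ae_differentiableAt] with t ht htab
  have htab := uIoc_subset_uIcc htab
  exact (deriv.log (ht htab) (h0 t htab)).symm

lemma intervalIntegrable_div_of_continuousOn {φ u : ℝ → ℝ} {a b : ℝ}
    (hφ : IntervalIntegrable φ volume a b) (hu : ContinuousOn u (uIcc a b))
    (h0 : ∀ t ∈ uIcc a b, u t ≠ 0) : IntervalIntegrable (fun t ↦ φ t / u t) volume a b := by
  simp only [div_eq_mul_inv]
  exact hφ.mul_continuousOn (hu.inv₀ h0)

lemma integral_div_add_integral_eq_log_sub_log {φ : ℝ → ℝ} {a b c : ℝ}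
    (hφ : IntervalIntegrable φ volume a b) (h0 : ∀ t ∈ uIcc a b, c + ∫ s in a..t, φ s ≠ 0) :
    ∫ t in a..b, φ t / (c + ∫ s in a..t, φ s) =
      Real.log (c + ∫ s in a..b, φ s) - Real.log c := by
  have hu : AbsolutelyContinuousOnInterval (fun t ↦ c + ∫ s in a..t, φ s) a b :=
    (LipschitzWith.const c).lipschitzOnWith.absolutelyContinuousOnInterval.fun_add
      (hφ.absolutelyContinuousOnInterval_intervalIntegral left_mem_uIcc)
  have := integral_deriv_div_eq_log_sub_log hu h0
  rw [intervalIntegral.integral_same, add_zero] at this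
  rw [← this]
  refine intervalIntegral.integral_congr_ae ?_
  filter_upwards [hφ.ae_hasDerivAt_integral] with t ht htab
  rw [((ht (uIoc_subset_uIcc htab) a left_mem_uIcc).const_add c).deriv]

lemma exists_contDiff_curve {E : Type*} [NormedAddCommGroup E] [NormedSpace ℝ E] {Ω : Set E}
    (ho : IsOpen Ω) (hc : IsPreconnected Ω) {p q : E} (hp : p ∈ Ω) (hq : q ∈ Ω) :
    ∃ σ : ℝ → E, ContDiff ℝ 1 σ ∧ MapsTo σ (Icc 0 1) Ω ∧ σ 0 = p ∧ σ 1 = q := by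
  obtain ⟨γ, hγ⟩ := (ho.isConnected_iff_isPathConnected.1 ⟨⟨p, hp⟩, hc⟩).joinedIn p hp q hq
  have hev : ∀ᶠ n in atTop, MapsTo (bernsteinApproximation n γ.toContinuousMap) univ Ω :=
    (bernsteinApproximation_uniform γ.toContinuousMap).eventually <|
      (ContinuousMap.isOpen_setOfPred_mapsTo isCompact_univ ho).mem_nhds fun t _ ↦ hγ t
  obtain ⟨n, hn, hn0⟩ := (hev.and (eventually_ne_atTop 0)).exists
  let σ : ℝ → E := fun t ↦ ∑ k : Fin (n + 1),
    (bernsteinPolynomial ℝ n k).eval t • γ (bernstein.z k)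
  have hσ (t : unitInterval) : σ t = bernsteinApproximation n γ.toContinuousMap t := by
    simp [σ, bernsteinApproximation.apply, bernstein]
  refine ⟨σ, ?_, fun t ht ↦ ?_, ?_, ?_⟩
  · refine ContDiff.sum fun k _ ↦ ContDiff.smul ?_ contDiff_const
    exact (bernsteinPolynomial ℝ n k).contDiff_aeval 1
  · exact hσ ⟨t, ht⟩ ▸ hn (mem_univ _)
  · exact (hσ 0).trans (by simp)
  · exact (hσ 1).trans (by simp [hn0])

variable {E F : Type*} [NormedAddCommGroup E] [NormedSpace ℂ E] [NormedAddCommGroup F]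
  [NormedSpace ℂ F] {σ g : ℝ → E} {a b : ℝ}

lemma isACWithDeriv_deriv_of_contDiff [CompleteSpace E] (hσ : ContDiff ℝ 1 σ) (a b : ℝ) :
    IsACWithDeriv σ (deriv σ) a b := by
  have hderiv : Continuous (deriv σ) := hσ.continuous_deriv_one
  refine ⟨hderiv.intervalIntegrable a b, fun t _ ↦ ?_⟩
  rw [intervalIntegral.integral_deriv_eq_sub
    (fun s _ ↦ (hσ.differentiable one_ne_zero) s) (hderiv.intervalIntegrable a t),
    add_sub_cancel]

namespace IsACWithDeriv

lemma continuousOn (h : IsACWithDeriv σ g a b) (hab : a ≤ b) : ContinuousOn σ (Icc a b) := by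
  have := intervalIntegral.continuousOn_primitive_interval' h.1 left_mem_uIcc
  rw [uIcc_of_le hab] at this
  exact (continuousOn_const.add this).congr h.2

lemma map_sub_const [CompleteSpace E] [CompleteSpace F] (h : IsACWithDeriv σ g a b)
    (A : E →L[ℂ] F) (ξ : E) :
    IsACWithDeriv (fun t ↦ A (σ t - ξ)) (fun t ↦ A (g t)) a b := by
  refine ⟨⟨A.integrable_comp h.1.1, A.integrable_comp h.1.2⟩, fun t ht ↦ ?_⟩
  beta_reduce
  have hgt : IntervalIntegrable g volume a t := h.1.mono_set <| by
    rw [uIcc_of_le ht.1, uIcc_of_le (ht.1.trans ht.2)]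
    exact Icc_subset_Icc_right ht.2
  rw [A.intervalIntegral_comp_comm hgt, ← map_add, h.2 t ht, add_sub_right_comm]

lemma reverse (h : IsACWithDeriv σ g a b) (hab : a ≤ b) :
    IsACWithDeriv (fun t ↦ σ (a + b - t)) (fun t ↦ -g (a + b - t)) a b := by
  have hsub (t : ℝ) (ht : t ∈ Icc a b) : IntervalIntegrable g volume a t := h.1.mono_set <| by
    rw [uIcc_of_le ht.1, uIcc_of_le hab]
    exact Icc_subset_Icc_right ht.2
  refine ⟨?_, fun t ht ↦ ?_⟩
  · have := (h.1.comp_sub_left (a + b)).symm.neg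
    rwa [add_sub_cancel_left, add_sub_cancel_right] at this
  · have ht' : a + b - t ∈ Icc a b := ⟨by linarith [ht.2], by linarith [ht.1]⟩
    have hb : b ∈ Icc a b := right_mem_Icc.2 hab
    beta_reduce
    rw [intervalIntegral.integral_neg, intervalIntegral.integral_comp_sub_left, add_sub_cancel_left,
      h.2 _ ht', h.2 b hb, ← intervalIntegral.integral_interval_sub_left (hsub b hb) (hsub _ ht')]
    abel

lemma norm_sub_le (h : IsACWithDeriv σ g a b) {t : ℝ} (ht : t ∈ Icc a b) :
    ‖σ t - σ a‖ ≤ ∫ s in a..t, ‖g s‖ := by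
  rw [h.2 t ht, add_sub_cancel_left]
  exact intervalIntegral.norm_integral_le_integral_norm ht.1

lemma log_one_add_norm_sub_div_norm_le (h : IsACWithDeriv σ g a b) (hab : a ≤ b)
    (h0 : ∀ t ∈ Icc a b, σ t ≠ 0) :
    Real.log (1 + ‖σ b - σ a‖ / ‖σ a‖) ≤ ∫ t in a..b, ‖g t‖ / ‖σ t‖ := by
  have hpos (t) (ht : t ∈ Icc a b) : 0 < ‖σ t‖ := norm_pos_iff.2 (h0 t ht)
  have ha := hpos a (left_mem_Icc.2 hab)
  let u : ℝ → ℝ := fun t ↦ ‖σ a‖ + ∫ s in a..t, ‖g s‖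
  have hle (t) (ht : t ∈ Icc a b) : ‖σ t‖ ≤ u t :=
    (norm_le_norm_add_norm_sub' _ _).trans (add_le_add_right (h.norm_sub_le ht) _)
  have hu0 (t) (ht : t ∈ uIcc a b) : u t ≠ 0 := by
    rw [uIcc_of_le hab] at ht
    exact ((hpos t ht).trans_le (hle t ht)).ne'
  have hu : ContinuousOn u (uIcc a b) := continuousOn_const.add
    (intervalIntegral.continuousOn_primitive_interval' h.1.norm left_mem_uIcc)
  have hσ : ContinuousOn (fun t ↦ ‖σ t‖) (uIcc a b) := by
    rw [uIcc_of_le hab]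
    exact (h.continuousOn hab).norm
  calc Real.log (1 + ‖σ b - σ a‖ / ‖σ a‖)
      ≤ Real.log (1 + (∫ t in a..b, ‖g t‖) / ‖σ a‖) := by
        gcongr
        exact h.norm_sub_le (right_mem_Icc.2 hab)
    _ = Real.log (u b / ‖σ a‖) := by rw [add_div, div_self ha.ne']
    _ = Real.log (u b) - Real.log ‖σ a‖ := Real.log_div (hu0 b right_mem_uIcc) ha.ne'
    _ = ∫ t in a..b, ‖g t‖ / u t := (integral_div_add_integral_eq_log_sub_log h.1.norm hu0).symm
    _ ≤ ∫ t in a..b, ‖g t‖ / ‖σ t‖ := by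
        refine intervalIntegral.integral_mono_on hab
          (intervalIntegrable_div_of_continuousOn h.1.norm hu hu0)
          (intervalIntegrable_div_of_continuousOn h.1.norm hσ fun t ht ↦ ?_) fun t ht ↦ ?_
        · exact (hpos t (uIcc_of_le hab ▸ ht)).ne'
        · exact div_le_div_of_nonneg_left (norm_nonneg _) (hpos t ht) (hle t ht)

end IsACWithDeriv

end Curves

section KobayashiMetric

variable {E : Type*} [NormedAddCommGroup E] [NormedSpace ℂ E] {D : Set E} {x v : E}

/-- A competitor in the definition of `kobMetric D x v`: a holomorphic disc `f` in `D` centred at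
`x` together with a vector `η` at the origin that `f` pushes forward to `v`. -/
structure IsKobayashiDisc (D : Set E) (x v : E) (f : ℂ → E) (η : ℂ) : Prop where
  differentiableOn : DifferentiableOn ℂ f (ball 0 1)
  mapsTo : MapsTo f (ball 0 1) D
  map_zero : f 0 = x
  smul_deriv : η • deriv f 0 = v

lemma kobMetric_eq_sInf (D : Set E) (x v : E) :
    kobMetric D x v = sInf {r | ∃ f η, IsKobayashiDisc D x v f η ∧ r = ‖η‖} := by
  unfold kobMetric
  congr! 7 with r f η
  rw [derivWithin_of_mem_nhds (ball_mem_nhds 0 one_pos)]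
  exact ⟨fun ⟨h₁, h₂, h₃, h₄, h₅⟩ ↦ ⟨⟨h₁, h₂, h₃, h₄⟩, h₅⟩,
    fun ⟨⟨h₁, h₂, h₃, h₄⟩, h₅⟩ ↦ ⟨h₁, h₂, h₃, h₄, h₅⟩⟩

lemma kobMetric_nonneg (D : Set E) (x v : E) : 0 ≤ kobMetric D x v := by
  rw [kobMetric_eq_sInf]
  refine Real.sInf_nonneg ?_
  rintro _ ⟨f, η, -, rfl⟩
  exact norm_nonneg η

namespace IsKobayashiDisc

variable {f : ℂ → E} {η : ℂ}

lemma kobMetric_le (h : IsKobayashiDisc D x v f η) : kobMetric D x v ≤ ‖η‖ := by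
  rw [kobMetric_eq_sInf]
  refine csInf_le ⟨0, ?_⟩ ⟨f, η, h, rfl⟩
  rintro _ ⟨f, η, -, rfl⟩
  exact norm_nonneg η

lemma hasDerivAt (h : IsKobayashiDisc D x v f η) : HasDerivAt f (deriv f 0) 0 :=
  (h.differentiableOn.differentiableAt (ball_mem_nhds 0 one_pos)).hasDerivAt

lemma neg (h : IsKobayashiDisc D x v f η) : IsKobayashiDisc D x (-v) f (-η) :=
  ⟨h.differentiableOn, h.mapsTo, h.map_zero, by rw [neg_smul, h.smul_deriv]⟩

lemma comp_mul_left (h : IsKobayashiDisc D x v f η) {r : ℂ} (hr0 : r ≠ 0) (hr1 : ‖r‖ ≤ 1) :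
    IsKobayashiDisc D x v (fun z ↦ f (r * z)) (η / r) := by
  have hmaps : MapsTo (r * ·) (ball 0 1) (ball (0 : ℂ) 1) := by
    intro z hz
    rw [mem_ball_zero_iff] at hz ⊢
    exact (norm_mul_le _ _).trans_lt (mul_lt_one_of_nonneg_of_lt_one_right hr1 (norm_nonneg _) hz)
  refine ⟨h.differentiableOn.comp (by fun_prop) hmaps, h.mapsTo.comp hmaps, by simp [h.map_zero],
    ?_⟩
  rw [deriv_comp_mul_left, mul_zero, smul_smul, div_mul_cancel₀ _ hr0, h.smul_deriv]

lemma add_smul (h : IsKobayashiDisc D x v f η) (hη : η ≠ 0) {δ : ℝ}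
    (hδ : ∀ z ∈ ball (0 : ℂ) 1, ball (f z) δ ⊆ D) {x' v' : E}
    (hlt : ‖x' - x‖ + ‖η⁻¹ • (v' - v)‖ < δ) :
    IsKobayashiDisc D x' v' (fun z ↦ f z + (x' - x + z • η⁻¹ • (v' - v))) η := by
  refine ⟨h.differentiableOn.add (by fun_prop), fun z hz ↦ hδ z hz ?_, by simp [h.map_zero], ?_⟩
  · rw [mem_ball_zero_iff] at hz
    rw [mem_ball, dist_eq_norm, add_sub_cancel_left]
    refine ((norm_add_le _ _).trans ?_).trans_lt hlt
    rw [norm_smul z]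
    gcongr
    exact mul_le_of_le_one_left (norm_nonneg _) hz.le
  · have : HasDerivAt (fun z ↦ f z + (x' - x + z • η⁻¹ • (v' - v)))
        (deriv f 0 + η⁻¹ • (v' - v)) 0 := by
      have := ((hasDerivAt_id (0 : ℂ)).smul_const (η⁻¹ • (v' - v))).const_add (x' - x)
      rw [one_smul] at this
      exact h.hasDerivAt.add this
    rw [this.deriv, smul_add, h.smul_deriv, smul_inv_smul₀ hη, add_sub_cancel]

end IsKobayashiDisc

lemma exists_isKobayashiDisc_of_ball_subset {ε : ℝ} (hε : 0 < ε) (hx : ball x ε ⊆ D) (v : E) :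
    ∃ f η, IsKobayashiDisc D x v f η ∧ ‖η‖ = ‖v‖ / ε := by
  have hconst : IsKobayashiDisc D x 0 (fun _ ↦ x) 1 :=
    ⟨by fun_prop, fun _ _ ↦ hx (mem_ball_self hε), rfl, by simp⟩
  rcases eq_or_ne v 0 with rfl | hv
  · exact ⟨_, 0, ⟨hconst.1, hconst.2, rfl, by simp⟩, by simp⟩
  · have hvn := norm_ne_zero_iff.2 hv
    let u : E := ((ε / ‖v‖ : ℝ) : ℂ) • v
    have hu : ‖u‖ = ε := by
      rw [norm_smul, Complex.norm_real, Real.norm_of_nonneg (by positivity), div_mul_cancel₀ _ hvn]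
    have hderiv : HasDerivAt (fun z : ℂ ↦ x + z • u) u 0 := by
      simpa using ((hasDerivAt_id (0 : ℂ)).smul_const u).const_add x
    refine ⟨fun z ↦ x + z • u, ((‖v‖ / ε : ℝ) : ℂ),
      ⟨by fun_prop, fun z hz ↦ hx ?_, by simp, ?_⟩, ?_⟩
    · rw [mem_ball_zero_iff] at hz
      rw [mem_ball, dist_eq_norm, add_sub_cancel_left, norm_smul, hu]
      exact mul_lt_of_lt_one_left hε hz
    · rw [hderiv.deriv, smul_smul, ← Complex.ofReal_mul, div_mul_div_cancel₀ hε.ne', div_self hvn,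
        Complex.ofReal_one, one_smul]
    · rw [Complex.norm_real, Real.norm_of_nonneg (by positivity)]

lemma kobMetric_le_norm_div {ε : ℝ} (hε : 0 < ε) (hx : ball x ε ⊆ D) (v : E) :
    kobMetric D x v ≤ ‖v‖ / ε := by
  obtain ⟨f, η, h, hη⟩ := exists_isKobayashiDisc_of_ball_subset hε hx v
  exact hη ▸ h.kobMetric_le

lemma kobMetric_neg (D : Set E) (x v : E) : kobMetric D x (-v) = kobMetric D x v := by
  simp only [kobMetric_eq_sInf]
  congr 1 with r
  constructor
  · rintro ⟨f, η, h, rfl⟩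
    exact ⟨f, -η, by simpa using h.neg, (norm_neg η).symm⟩
  · rintro ⟨f, η, h, rfl⟩
    exact ⟨f, -η, h.neg, (norm_neg η).symm⟩

lemma exists_isKobayashiDisc_norm_lt (ho : IsOpen D) (hx : x ∈ D) {c : ℝ}
    (hc : kobMetric D x v < c) : ∃ f η, IsKobayashiDisc D x v f η ∧ η ≠ 0 ∧ ‖η‖ < c := by
  obtain ⟨ε, hε, hball⟩ := Metric.isOpen_iff.1 ho x hx
  obtain ⟨f₀, η₀, h₀, -⟩ := exists_isKobayashiDisc_of_ball_subset hε hball v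
  have hc0 : 0 < c := (kobMetric_nonneg D x v).trans_lt hc
  rw [kobMetric_eq_sInf] at hc
  obtain ⟨_, ⟨f, η, h, rfl⟩, hlt⟩ := exists_lt_of_csInf_lt (by exact ⟨_, f₀, η₀, h₀, rfl⟩) hc
  rcases eq_or_ne η 0 with rfl | hη
  · have hv : v = 0 := by rw [← h.smul_deriv, zero_smul]
    refine ⟨fun _ ↦ x, ((c / 2 : ℝ) : ℂ), ⟨by fun_prop, fun _ _ ↦ hx, rfl, by simp [hv]⟩, ?_, ?_⟩
    · exact_mod_cast (half_pos hc0).ne'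
    · rw [Complex.norm_real, Real.norm_of_nonneg (half_pos hc0).le]
      exact half_lt_self hc0
  · exact ⟨f, η, h, hη, hlt⟩

lemma exists_isKobayashiDisc_ball_subset (ho : IsOpen D) (hx : x ∈ D) {c : ℝ}
    (hc : kobMetric D x v < c) : ∃ f η, IsKobayashiDisc D x v f η ∧ η ≠ 0 ∧ ‖η‖ < c ∧
      ∃ δ > 0, ∀ z ∈ ball (0 : ℂ) 1, ball (f z) δ ⊆ D := by
  obtain ⟨f, η, h, hη, hlt⟩ := exists_isKobayashiDisc_norm_lt ho hx hc
  have hc0 : 0 < c := (norm_nonneg η).trans_lt hlt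
  obtain ⟨r, hηr, hr1⟩ := exists_between ((div_lt_one hc0).2 hlt)
  have hr0 : 0 < r := (div_nonneg (norm_nonneg η) hc0.le).trans_lt hηr
  have hrn : ‖(r : ℂ)‖ = r := by rw [Complex.norm_real, Real.norm_of_nonneg hr0.le]
  have hrC : (r : ℂ) ≠ 0 := by exact_mod_cast hr0.ne'
  have hmaps : MapsTo ((r : ℂ) * ·) (closedBall 0 1) (ball 0 1) := by
    intro z hz
    rw [mem_closedBall_zero_iff] at hz
    rw [mem_ball_zero_iff, norm_mul, hrn]
    exact mul_lt_one_of_nonneg_of_lt_one_left hr0.le hr1 hz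
  have hK : IsCompact ((fun z ↦ f (r * z)) '' closedBall 0 1) :=
    (isCompact_closedBall _ _).image_of_continuousOn
      (h.differentiableOn.continuousOn.comp (by fun_prop) hmaps)
  obtain ⟨δ, hδ, hsub⟩ := hK.exists_thickening_subset_open ho
    (h.mapsTo.comp hmaps).image_subset
  refine ⟨_, _, h.comp_mul_left hrC (hrn.trans_le hr1.le), div_ne_zero hη hrC, ?_, δ, hδ,
    fun z hz ↦ ?_⟩
  · rwa [norm_div, hrn, div_lt_comm₀ hr0 hc0]
  · exact (ball_subset_thickening (mem_image_of_mem _ (ball_subset_closedBall hz)) δ).trans hsub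

theorem upperSemicontinuousOn_kobMetric (ho : IsOpen D) :
    UpperSemicontinuousOn (fun w : E × E ↦ kobMetric D w.1 w.2) (D ×ˢ univ) := by
  rintro ⟨x, v⟩ ⟨hx, -⟩ c hc
  obtain ⟨f, η, h, hη, hηc, δ, hδ, hball⟩ := exists_isKobayashiDisc_ball_subset ho hx hc
  have hnear : ∀ᶠ w : E × E in 𝓝 (x, v), ‖w.1 - x‖ + ‖η⁻¹ • (w.2 - v)‖ < δ :=
    ContinuousAt.eventually_lt (by fun_prop) continuousAt_const (by simpa using hδ)
  filter_upwards [mem_nhdsWithin_of_mem_nhds hnear] with w hw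
  exact (h.add_smul hη hball hw).kobMetric_le.trans_lt hηc

theorem HasSimplyConnectedSlices.norm_map_div_le_kobMetric (hD : HasSimplyConnectedSlices D)
    (ho : IsOpen D) {A : E →L[ℂ] ℂ} {ξ : E} (hA : ∀ y ∈ D, A (y - ξ) ≠ 0) (hx : x ∈ D) (v : E) :
    1 / 4 * (‖A v‖ / ‖A (x - ξ)‖) ≤ kobMetric D x v := by
  refine le_of_forall_gt fun c hc ↦ ?_
  obtain ⟨f, η, h, -, hηc⟩ := exists_isKobayashiDisc_norm_lt ho hx hc
  have hpos : 0 < ‖A (x - ξ)‖ := norm_pos_iff.2 (hA x hx)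
  refine lt_of_le_of_lt ?_ hηc
  calc 1 / 4 * (‖A v‖ / ‖A (x - ξ)‖)
      = 1 / 4 * (‖η‖ * ‖A (deriv f 0)‖ / ‖A (x - ξ)‖) := by
        rw [← h.smul_deriv, map_smul, norm_smul]
    _ ≤ 1 / 4 * (‖η‖ * (4 * ‖A (x - ξ)‖) / ‖A (x - ξ)‖) := by
        gcongr
        exact h.map_zero ▸ hD.norm_map_deriv_le ho hA h.differentiableOn h.mapsTo
    _ = ‖η‖ := by field_simp

end KobayashiMetric

section KobayashiDistance

lemma aestronglyMeasurable_comp_of_upperSemicontinuousOn {α X : Type*} [MeasurableSpace α]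
    {μ : Measure α} [TopologicalSpace X] [TopologicalSpace.PseudoMetrizableSpace X] {U : Set X}
    {φ : X → ℝ} {f : α → X} (hU : IsOpen U) (hφ : UpperSemicontinuousOn φ U)
    (hf : AEStronglyMeasurable f μ) (hfU : ∀ᵐ t ∂μ, f t ∈ U) :
    AEStronglyMeasurable (fun t ↦ φ (f t)) μ := by
  borelize X
  have hφm : Measurable (U.indicator φ) := by
    refine measurable_of_restrict_of_restrict_compl hU.measurableSet ?_ ?_
    · have : U.domRestrict (U.indicator φ) = U.domRestrict φ := funext fun x ↦ by simp
      exact this ▸ (upperSemicontinuousOn_iff_restrict.2 hφ).measurable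
    · have : Uᶜ.domRestrict (U.indicator φ) = 0 := funext fun x ↦ indicator_of_notMem x.2 φ
      exact this ▸ measurable_zero
  refine ((hφm.comp_aemeasurable hf.aemeasurable).congr ?_).aestronglyMeasurable
  filter_upwards [hfU] with t ht using indicator_of_mem ht φ

variable {E : Type*} [NormedAddCommGroup E] [NormedSpace ℂ E] {D : Set E}

lemma IsACWithDeriv.intervalIntegrable_kobMetric {σ g : ℝ → E} {a b : ℝ}
    (h : IsACWithDeriv σ g a b) (hab : a ≤ b) (ho : IsOpen D) (hm : MapsTo σ (Icc a b) D) :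
    IntervalIntegrable (fun t ↦ kobMetric D (σ t) (g t)) volume a b := by
  have hσ := h.continuousOn hab
  obtain ⟨δ, hδ, hsub⟩ := (isCompact_Icc.image_of_continuousOn hσ).exists_thickening_subset_open ho
    hm.image_subset
  have hg := h.1
  rw [intervalIntegrable_iff_integrableOn_Icc_of_le hab] at hg ⊢
  have hmeas : AEStronglyMeasurable (fun t ↦ kobMetric D (σ t) (g t)) (volume.restrict (Icc a b)) :=
    aestronglyMeasurable_comp_of_upperSemicontinuousOn (f := fun t ↦ (σ t, g t))
      (ho.prod isOpen_univ) (upperSemicontinuousOn_kobMetric ho)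
      ((hσ.aestronglyMeasurable measurableSet_Icc).prodMk hg.aestronglyMeasurable)
      ((ae_restrict_mem measurableSet_Icc).mono fun t ht ↦ ⟨hm ht, mem_univ _⟩)
  refine (hg.norm.div_const δ).mono' hmeas ?_
  filter_upwards [ae_restrict_mem measurableSet_Icc] with t ht
  rw [Real.norm_of_nonneg (kobMetric_nonneg _ _ _)]
  exact kobMetric_le_norm_div hδ ((ball_subset_thickening (mem_image_of_mem σ ht) δ).trans hsub) _

theorem HasSimplyConnectedSlices.log_le_integral_kobMetric [CompleteSpace E]
    (hD : HasSimplyConnectedSlices D) (ho : IsOpen D) {A : E →L[ℂ] ℂ} {ξ : E}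
    (hA : ∀ y ∈ D, A (y - ξ) ≠ 0) {σ g : ℝ → E} {a b : ℝ} (h : IsACWithDeriv σ g a b)
    (hab : a ≤ b) (hm : MapsTo σ (Icc a b) D) :
    1 / 4 * Real.log (1 + ‖A (σ b - σ a)‖ / ‖A (σ a - ξ)‖) ≤
      ∫ t in a..b, kobMetric D (σ t) (g t) := by
  have h' := h.map_sub_const A ξ
  have h0 (t) (ht : t ∈ Icc a b) : A (σ t - ξ) ≠ 0 := hA _ (hm ht)
  calc 1 / 4 * Real.log (1 + ‖A (σ b - σ a)‖ / ‖A (σ a - ξ)‖)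
      ≤ 1 / 4 * ∫ t in a..b, ‖A (g t)‖ / ‖A (σ t - ξ)‖ := by
        have := h'.log_one_add_norm_sub_div_norm_le hab h0
        rw [← map_sub, sub_sub_sub_cancel_right] at this
        gcongr
    _ = ∫ t in a..b, 1 / 4 * (‖A (g t)‖ / ‖A (σ t - ξ)‖) :=
        (intervalIntegral.integral_const_mul _ _).symm
    _ ≤ ∫ t in a..b, kobMetric D (σ t) (g t) := by
        refine intervalIntegral.integral_mono_on hab ((intervalIntegrable_div_of_continuousOn
          h'.1.norm ?_ ?_).const_mul _) (h.intervalIntegrable_kobMetric hab ho hm) fun t ht ↦ ?_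
        · exact (uIcc_of_le hab).symm ▸ (h'.continuousOn hab).norm
        · exact fun t ht ↦ norm_ne_zero_iff.2 (h0 t (uIcc_of_le hab ▸ ht))
        · exact hD.norm_map_div_le_kobMetric ho hA (hm ht) (g t)

lemma kobDist_comm (D : Set E) (x y : E) : kobDist D x y = kobDist D y x := by
  unfold kobDist
  congr 1
  refine Subset.antisymm ?_ ?_
  all_goals
    rintro _ ⟨a, b, σ, g, hab, h, hm, rfl, rfl, rfl⟩
    refine ⟨a, b, _, _, hab, h.reverse hab, fun t ht ↦ hm ?_, by simp, by simp, ?_⟩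
    · exact ⟨by linarith [ht.2], by linarith [ht.1]⟩
    · simp only [kobMetric_neg]
      rw [intervalIntegral.integral_comp_sub_left (fun t ↦ kobMetric D (σ t) (g t)),
        add_sub_cancel_right, add_sub_cancel_left]

lemma bdistDir_neg (D : Set E) (x v : E) : bdistDir D x (-v) = bdistDir D x v := by
  unfold bdistDir
  congr! 4 with w
  exact ⟨fun ⟨c, hc⟩ ↦ ⟨-c, by simpa using hc⟩, fun ⟨c, hc⟩ ↦ ⟨-c, by simpa using hc⟩⟩

lemma bdistDir_nonneg (D : Set E) (x v : E) : 0 ≤ bdistDir D x v := infDist_nonneg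

lemma exists_add_smul_mem_frontier_norm_eq_bdistDir [FiniteDimensional ℂ E] {x v : E} (hx : x ∈ D)
    (hline : ∃ c : ℂ, x + c • v ∉ D) :
    ∃ c : ℂ, x + c • v ∈ frontier D ∧ ‖c • v‖ = bdistDir D x v := by
  have : ProperSpace E := FiniteDimensional.proper ℂ E
  have hclosed : IsClosed {w | ∃ c : ℂ, w = x + c • v} := by
    convert (Submodule.closed_of_finiteDimensional (Submodule.span ℂ {v})).preimage
      (continuous_sub_right x) using 1
    ext w
    simp [Submodule.mem_span_singleton, eq_sub_iff_add_eq', eq_comm]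
  have hne : (frontier D ∩ {w | ∃ c : ℂ, w = x + c • v}).Nonempty := by
    have hslice : (frontier ((fun c : ℂ ↦ x + c • v) ⁻¹' D)).Nonempty :=
      nonempty_frontier_iff.2 ⟨⟨0, by simpa using hx⟩, (ne_univ_iff_exists_notMem _).2 hline⟩
    obtain ⟨c, hc⟩ := hslice
    have hcont : Continuous fun c : ℂ ↦ x + c • v := by fun_prop
    exact ⟨_, hcont.frontier_preimage_subset _ hc, c, rfl⟩
  obtain ⟨_, ⟨hfr, c, rfl⟩, hd⟩ := (isClosed_frontier.inter hclosed).exists_infDist_eq_dist hne x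
  exact ⟨c, hfr, by rw [bdistDir, hd, dist_self_add_right]⟩

lemma exists_isACWithDeriv_curve [CompleteSpace E] (ho : IsOpen D) (hc : IsPreconnected D)
    {p q : E} (hp : p ∈ D) (hq : q ∈ D) : ∃ σ g : ℝ → E, IsACWithDeriv σ g 0 1 ∧
      MapsTo σ (Icc 0 1) D ∧ σ 0 = p ∧ σ 1 = q := by
  obtain ⟨σ, hσ, h⟩ := exists_contDiff_curve ho hc hp hq
  exact ⟨σ, deriv σ, isACWithDeriv_deriv_of_contDiff hσ 0 1, h⟩

theorem HasSimplyConnectedSlices.log_le_kobDist [CompleteSpace E]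
    (hD : HasSimplyConnectedSlices D) (ho : IsOpen D) {A : E →L[ℂ] ℂ} {ξ : E}
    (hA : ∀ y ∈ D, A (y - ξ) ≠ 0) {p q : E} (hp : p ∈ D) (hq : q ∈ D) :
    1 / 4 * Real.log (1 + ‖A (q - p)‖ / ‖A (p - ξ)‖) ≤ kobDist D p q := by
  obtain ⟨σ, g, h, hm, h0, h1⟩ := exists_isACWithDeriv_curve ho hD.isPreconnected hp hq
  refine le_csInf ⟨_, 0, 1, σ, g, zero_le_one, h, hm, h0, h1, rfl⟩ ?_
  rintro _ ⟨a, b, σ, g, hab, h, hm, rfl, rfl, rfl⟩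
  exact hD.log_le_integral_kobMetric ho hA h hab hm

theorem CConvex.log_bdistDir_le_kobDist [FiniteDimensional ℂ E] (hD : CConvex D) (ho : IsOpen D)
    {p q : E} (hp : p ∈ D) (hq : q ∈ D) (hline : ∃ c : ℂ, p + c • (p - q) ∉ D) :
    1 / 4 * Real.log (1 + ‖p - q‖ / bdistDir D p (p - q)) ≤ kobDist D p q := by
  have : CompleteSpace E := FiniteDimensional.complete ℂ E
  have hslices := hD.hasSimplyConnectedSlices
  obtain ⟨c, hfr, hdist⟩ := exists_add_smul_mem_frontier_norm_eq_bdistDir hp hline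
  obtain ⟨A, hA⟩ := exists_forall_map_sub_ne_zero hslices ho (ho.frontier_eq ▸ hfr).2
  have hAp : ‖c‖ * ‖A (p - q)‖ ≠ 0 := by
    simpa [-map_sub] using hA p hp
  have hratio : ‖A (q - p)‖ / ‖A (p - (p + c • (p - q)))‖ = ‖p - q‖ / bdistDir D p (p - q) := by
    have hpq : ‖p - q‖ ≠ 0 := fun h ↦ hAp (by simp [norm_eq_zero.1 h, -map_sub])
    rw [← hdist, sub_add_cancel_left, ← neg_sub p q, map_neg, map_neg, norm_neg, norm_neg, map_smul,
      norm_smul, norm_smul, div_mul_cancel_right₀ (right_ne_zero_of_mul hAp),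
      div_mul_cancel_right₀ hpq]
  exact hratio ▸ hslices.log_le_kobDist ho hA hp hq

theorem statement_16_general [FiniteDimensional ℂ E] (ho : IsOpen D) (hD : CConvex D) {p q : E}
    (hp : p ∈ D) (hq : q ∈ D) (hline : ∃ c : ℂ, p + c • (p - q) ∉ D) :
    1 / 4 * |Real.log (1 + ‖p - q‖ / min (bdistDir D p (p - q)) (bdistDir D q (p - q)))| ≤
      kobDist D p q := by
  rw [abs_of_nonneg (Real.log_nonneg (le_add_of_nonneg_right (div_nonneg (norm_nonneg _)
    (le_min (bdistDir_nonneg _ _ _) (bdistDir_nonneg _ _ _)))))]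
  rcases min_choice (bdistDir D p (p - q)) (bdistDir D q (p - q)) with h | h <;> rw [h]
  · exact hD.log_bdistDir_le_kobDist ho hp hq hline
  · rw [← neg_sub, bdistDir_neg, norm_neg, kobDist_comm]
    obtain ⟨c, hc⟩ := hline
    exact hD.log_bdistDir_le_kobDist ho hq hp ⟨-(1 + c), by convert hc using 2; module⟩

lemma exists_add_smul_notMem_of_isBounded (hb : Bornology.IsBounded D) (x : E) {v : E}
    (hv : v ≠ 0) : ∃ c : ℂ, x + c • v ∉ D := by
  by_contra! hmem
  obtain ⟨R, hR⟩ := hb.exists_norm_le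
  obtain ⟨c, hc⟩ := NormedSpace.exists_lt_norm ℂ ℂ ((R + ‖x‖) / ‖v‖)
  rw [div_lt_iff₀ (norm_pos_iff.2 hv), ← norm_smul] at hc
  have := norm_sub_le (x + c • v) x
  rw [add_sub_cancel_left] at this
  linarith [hR _ (hmem c)]

end KobayashiDistance

theorem statement_16 {n : ℕ}
    (Ω : Set (EuclideanSpace ℂ (Fin n)))
    (hΩo : IsOpen Ω) (hΩc : IsConnected Ω) (hΩb : Bornology.IsBounded Ω)
    (hcc : CConvex Ω)
    (p q : EuclideanSpace ℂ (Fin n)) (hp : p ∈ Ω) (hq : q ∈ Ω) (hpq : p ≠ q) :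
    (1 / 4) * |Real.log (1 + ‖p - q‖ /
        min (bdistDir Ω p (p - q)) (bdistDir Ω q (p - q)))| ≤ kobDist Ω p q :=
  statement_16_general hΩo hcc hp hq
    (exists_add_smul_notMem_of_isBounded hΩb p (sub_ne_zero.2 hpq))
end
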